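/- arXiv:1106.1840 — 2 statements merged into one kernel-verified Lean document; each statement's English description precedes it below -/
import Mathlib

section
/- Let B be a connected building set on [m] with m ≥ 2, and let S ∈ B with S ≠ [m]. Then the subset of the nestohedron P_B on which the linear functional x ↦ ∑_{i∈S} x_i attains its minimum is a facet of P_B, and this facet is combinatorially equivalent to the product P_{B|_S} × P_{B/S}, where B|_S = {S' ∈ B : S' ⊆ S} is a connected building set on S and B/S = {S'' \ S : S'' ∈ B, S'' ⊄ S} is a connected building set on [m] \ S. Moreover, the assignment S ↦ (facet on which ∑_{i∈S} x_i is minimized) is a bijection from B \ {[m]} to the set of facets of P_B. -/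
open Pointwise

namespace GalD

/-- A polytope in `ℝ^d`: the convex hull of a finite set of points. -/
def IsPolytope {d : ℕ} (P : Set (Fin d → ℝ)) : Prop :=
  ∃ V : Finset (Fin d → ℝ), P = convexHull ℝ (V : Set (Fin d → ℝ))

/-- A face of `P`: a nonempty exposed face of `P` (`P` itself included). -/
def IsFaceOf {d : ℕ} (F P : Set (Fin d → ℝ)) : Prop :=
  F.Nonempty ∧ IsExposed ℝ P F

/-- The dimension of a set: the rank of the direction of its affine span. -/
noncomputable def polyDim {d : ℕ} (P : Set (Fin d → ℝ)) : ℕ :=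
  Module.finrank ℝ (affineSpan ℝ P).direction

/-- A facet: a face of dimension `dim P - 1`. -/
def IsFacetOf {d : ℕ} (F P : Set (Fin d → ℝ)) : Prop :=
  IsFaceOf F P ∧ polyDim F + 1 = polyDim P

/-- A vertex: a point spanning a face of dimension 0. -/
def IsVertexOf {d : ℕ} (v : Fin d → ℝ) (P : Set (Fin d → ℝ)) : Prop :=
  IsFaceOf {v} P

/-- A simple polytope: every vertex is contained in exactly `dim P` facets. -/
def IsSimplePolytope {d : ℕ} (P : Set (Fin d → ℝ)) : Prop :=
  IsPolytope P ∧ ∀ v, IsVertexOf v P →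
    {F : Set (Fin d → ℝ) | IsFacetOf F P ∧ v ∈ F}.ncard = polyDim P

/-- A flag polytope: simple, and every collection of pairwise intersecting facets
has a nonempty common intersection. -/
def IsFlagPolytope {d : ℕ} (P : Set (Fin d → ℝ)) : Prop :=
  IsSimplePolytope P ∧
  ∀ 𝒮 : Set (Set (Fin d → ℝ)), 𝒮.Nonempty → (∀ F ∈ 𝒮, IsFacetOf F P) →
    (∀ F ∈ 𝒮, ∀ G ∈ 𝒮, (F ∩ G).Nonempty) → (⋂₀ 𝒮).Nonempty

/-- Combinatorial equivalence: an order isomorphism between the face posets. -/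
def CombEquiv {d₁ d₂ : ℕ} (P : Set (Fin d₁ → ℝ)) (Q : Set (Fin d₂ → ℝ)) : Prop :=
  Nonempty ({F : Set (Fin d₁ → ℝ) // IsFaceOf F P} ≃o
            {G : Set (Fin d₂ → ℝ) // IsFaceOf G Q})

/-- The product of a set in `ℝ^{d₁}` and a set in `ℝ^{d₂}`, inside `ℝ^{d₁+d₂}`. -/
def polyProd {d₁ d₂ : ℕ} (Q : Set (Fin d₁ → ℝ)) (R : Set (Fin d₂ → ℝ)) :
    Set (Fin (d₁ + d₂) → ℝ) :=
  {x | (fun i => x (Fin.castAdd d₂ i)) ∈ Q ∧ (fun j => x (Fin.natAdd d₁ j)) ∈ R}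

/-- `P` is not combinatorially equivalent to a nontrivial product of two polytopes. -/
def Indecomposable {d : ℕ} (P : Set (Fin d → ℝ)) : Prop :=
  ¬ ∃ (d₁ d₂ : ℕ) (Q : Set (Fin d₁ → ℝ)) (R : Set (Fin d₂ → ℝ)),
    IsPolytope Q ∧ IsPolytope R ∧ 1 ≤ polyDim Q ∧ 1 ≤ polyDim R ∧
    CombEquiv P (polyProd Q R)

/-- A building set on the ground set `V`. -/
structure IsBuildingSetOn {m : ℕ} (V : Finset (Fin m)) (B : Finset (Finset (Fin m))) :
    Prop where
  subset_ground : ∀ S ∈ B, S ⊆ V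
  nonempty_mem : ∀ S ∈ B, S.Nonempty
  singleton_mem : ∀ i ∈ V, ({i} : Finset (Fin m)) ∈ B
  ground_mem : V ∈ B
  union_mem : ∀ S₁ ∈ B, ∀ S₂ ∈ B, (S₁ ∩ S₂).Nonempty → S₁ ∪ S₂ ∈ B

/-- A connected building set on `[m]`. -/
def IsConnectedBuildingSet (m : ℕ) (B : Finset (Finset (Fin m))) : Prop :=
  IsBuildingSetOn (Finset.univ : Finset (Fin m)) B

/-- The nestohedron `P_B`: the Minkowski sum of the simplices `Δ_S`, `S ∈ B`. -/
noncomputable def nestohedron (m : ℕ) (B : Finset (Finset (Fin m))) :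
    Set (Fin m → ℝ) :=
  ∑ S ∈ B, convexHull ℝ ((fun i => (Pi.single i 1 : Fin m → ℝ)) '' (S : Set (Fin m)))

/-- A diagonal of a convex `N`-gon with vertices labelled by `ZMod N`. -/
def IsDiag (N : ℕ) (e : Finset (ZMod N)) : Prop :=
  ∃ a b : ZMod N, e = {a, b} ∧ b ≠ a ∧ b ≠ a + 1 ∧ b ≠ a - 1

/-- `c` lies strictly between `a` and `b` on the arc from `a` to `b` (counterclockwise). -/
def StrictBtw (N : ℕ) (a c b : ZMod N) : Prop :=
  0 < (c - a).val ∧ (c - a).val < (b - a).val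

/-- Two diagonals cross: their endpoints alternate around the circle. -/
def Crosses (N : ℕ) (e f : Finset (ZMod N)) : Prop :=
  ∃ a b c d : ZMod N, e = {a, b} ∧ f = {c, d} ∧
    StrictBtw N a c b ∧ StrictBtw N b d a

/-- Image of a diagonal under the central symmetry `a ↦ a + n` of the `2n`-gon. -/
def centralSym (n : ℕ) (e : Finset (ZMod (2 * n))) : Finset (ZMod (2 * n)) :=
  e.image (· + (n : ZMod (2 * n)))

/-- A diameter of the `2n`-gon: a diagonal `{a, a + n}`. -/
def IsDiameter (n : ℕ) (e : Finset (ZMod (2 * n))) : Prop :=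
  ∃ a : ZMod (2 * n), e = {a, a + (n : ZMod (2 * n))}

/-- Raw elements of the type `D_n` model: symmetric pairs of diagonals,
red diameters and blue diameters. -/
inductive DElem (n : ℕ) where
  | pair : Finset (Finset (ZMod (2 * n))) → DElem n
  | red  : Finset (ZMod (2 * n)) → DElem n
  | blue : Finset (ZMod (2 * n)) → DElem n

/-- Membership in the set `M_n` of the type `D_n` model. -/
def memM (n : ℕ) : DElem n → Prop
  | .pair s => ∃ e, IsDiag (2 * n) e ∧ ¬ IsDiameter n e ∧ s = {e, centralSym n e}
  | .red e => IsDiag (2 * n) e ∧ IsDiameter n e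
  | .blue e => IsDiag (2 * n) e ∧ IsDiameter n e

/-- Compatibility of elements of the type `D_n` model. -/
def DCompat (n : ℕ) : DElem n → DElem n → Prop
  | .pair s, .pair t => ∀ e ∈ s, ∀ f ∈ t, ¬ Crosses (2 * n) e f
  | .pair s, .red e => ∀ f ∈ s, ¬ Crosses (2 * n) e f
  | .pair s, .blue e => ∀ f ∈ s, ¬ Crosses (2 * n) e f
  | .red e, .pair s => ∀ f ∈ s, ¬ Crosses (2 * n) e f
  | .blue e, .pair s => ∀ f ∈ s, ¬ Crosses (2 * n) e f
  | .red _, .red _ => True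
  | .blue _, .blue _ => True
  | .red e, .blue f => e = f
  | .blue e, .red f => e = f

/-- The set `M_n` of the type `D_n` model, as a type. -/
def MSet (n : ℕ) := {x : DElem n // memM n x}

/-- `P` realizes the type `D_n` model via the bijection `φ`. -/
def RealizesDWith (n : ℕ) {d : ℕ} (P : Set (Fin d → ℝ))
    (φ : MSet n → Set (Fin d → ℝ)) : Prop :=
  IsPolytope P ∧ IsFlagPolytope P ∧ polyDim P = n ∧
  (∀ x, IsFacetOf (φ x) P) ∧ Function.Injective φ ∧
  (∀ F, IsFacetOf F P → ∃ x, φ x = F) ∧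
  ∀ x y : MSet n, x ≠ y → ((φ x ∩ φ y).Nonempty ↔ DCompat n x.1 y.1)

/-- `P` realizes the type `D_n` model. -/
def RealizesD (n : ℕ) {d : ℕ} (P : Set (Fin d → ℝ)) : Prop :=
  ∃ φ, RealizesDWith n P φ

/-- Elements of the type `A_k` model: diagonals of a convex `(k+3)`-gon. -/
def ASet (k : ℕ) := {e : Finset (ZMod (k + 3)) // IsDiag (k + 3) e}

/-- `P` realizes the type `A_k` model via the bijection `φ`. -/
def RealizesAWith (k : ℕ) {d : ℕ} (P : Set (Fin d → ℝ))
    (φ : ASet k → Set (Fin d → ℝ)) : Prop :=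
  IsPolytope P ∧ IsFlagPolytope P ∧ polyDim P = k ∧
  (∀ x, IsFacetOf (φ x) P) ∧ Function.Injective φ ∧
  (∀ F, IsFacetOf F P → ∃ x, φ x = F) ∧
  ∀ x y : ASet k, x ≠ y → ((φ x ∩ φ y).Nonempty ↔ ¬ Crosses (k + 3) x.1 y.1)

/-- `P` realizes the type `A_k` model. -/
def RealizesA (k : ℕ) {d : ℕ} (P : Set (Fin d → ℝ)) : Prop :=
  ∃ φ, RealizesAWith k P φ

/-- A closed halfspace in `ℝ^d`. -/
def IsClosedHalfspace {d : ℕ} (H : Set (Fin d → ℝ)) : Prop :=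
  ∃ (l : (Fin d → ℝ) →ₗ[ℝ] ℝ) (c : ℝ), l ≠ 0 ∧ H = {x | l x ≤ c}

/-- `P'` is obtained from `P` by shaving off a face of codimension 2. -/
def ObtainedByShaving {d : ℕ} (P P' : Set (Fin d → ℝ)) : Prop :=
  ∃ G H : Set (Fin d → ℝ), IsFaceOf G P ∧ polyDim G + 2 = polyDim P ∧
    IsClosedHalfspace H ∧ G ∩ H = ∅ ∧
    (∀ v, IsVertexOf v P → v ∉ G → v ∈ interior H) ∧ P' = P ∩ H

/-- The restriction `B|_S` of a building set. -/
def restrictBS {m : ℕ} (B : Finset (Finset (Fin m))) (S : Finset (Fin m)) :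
    Finset (Finset (Fin m)) :=
  B.filter (· ⊆ S)

/-- The contraction `B / S` of a building set. -/
def contractBS {m : ℕ} (B : Finset (Finset (Fin m))) (S : Finset (Fin m)) :
    Finset (Finset (Fin m)) :=
  (B.filter (fun S'' => ¬ S'' ⊆ S)).image (fun S'' => S'' \ S)

/-- The subset of the nestohedron `P_B` on which `x ↦ ∑_{i ∈ S} x i` is minimized. -/
def minFace (m : ℕ) (B : Finset (Finset (Fin m))) (S : Finset (Fin m)) :
    Set (Fin m → ℝ) :=
  {x ∈ nestohedron m B | ∀ y ∈ nestohedron m B, ∑ i ∈ S, x i ≤ ∑ i ∈ S, y i}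


/-- The face of `K` where `w` is maximal. -/
def maxF {d : ℕ} (w : Fin d → ℝ) (K : Set (Fin d → ℝ)) : Set (Fin d → ℝ) :=
  {x ∈ K | ∀ y ∈ K, w ⬝ᵥ y ≤ w ⬝ᵥ x}

theorem maxF_subset {d : ℕ} (w : Fin d → ℝ) (K : Set (Fin d → ℝ)) : maxF w K ⊆ K :=
  fun _ hx => hx.1

theorem maxF_add_mem {d : ℕ} {w : Fin d → ℝ} {A B : Set (Fin d → ℝ)} {a b : Fin d → ℝ}
    (ha : a ∈ A) (hb : b ∈ B) (h : a + b ∈ maxF w (A + B)) : a ∈ maxF w A ∧ b ∈ maxF w B := by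
  refine ⟨⟨ha, fun y hy => ?_⟩, ⟨hb, fun y hy => ?_⟩⟩
  · have := h.2 (y + b) (Set.add_mem_add hy hb)
    rw [dotProduct_add, dotProduct_add] at this; linarith
  · have := h.2 (a + y) (Set.add_mem_add ha hy)
    rw [dotProduct_add, dotProduct_add] at this; linarith

theorem maxF_add {d : ℕ} (w : Fin d → ℝ) (A B : Set (Fin d → ℝ)) :
    maxF w (A + B) = maxF w A + maxF w B := by
  ext x; constructor
  · intro hx
    obtain ⟨a, ha, b, hb, rfl⟩ := Set.mem_add.1 hx.1
    obtain ⟨h1, h2⟩ := maxF_add_mem ha hb hx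
    exact Set.add_mem_add h1 h2
  · intro hx
    obtain ⟨a, ha, b, hb, rfl⟩ := Set.mem_add.1 hx
    refine ⟨Set.add_mem_add ha.1 hb.1, ?_⟩
    intro y hy
    obtain ⟨a', ha', b', hb', rfl⟩ := Set.mem_add.1 hy
    rw [dotProduct_add, dotProduct_add]
    exact add_le_add (ha.2 _ ha') (hb.2 _ hb')

theorem maxF_sum {d : ℕ} {ι : Type*} (w : Fin d → ℝ) (s : Finset ι)
    (K : ι → Set (Fin d → ℝ)) : maxF w (∑ i ∈ s, K i) = ∑ i ∈ s, maxF w (K i) := by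
  classical
  induction s using Finset.induction_on with
  | empty =>
    ext x; simp only [Finset.sum_empty, maxF, Set.mem_ofPred_eq, Set.mem_zero]
    constructor
    · exact fun h => h.1
    · rintro rfl; exact ⟨rfl, by rintro y rfl; exact le_rfl⟩
  | insert a s ha ih => rw [Finset.sum_insert ha, Finset.sum_insert ha, maxF_add, ih]

theorem sum_nonempty {d : ℕ} {ι : Type*} (s : Finset ι)
    (K : ι → Set (Fin d → ℝ)) (h : ∀ i ∈ s, (K i).Nonempty) : (∑ i ∈ s, K i).Nonempty := by
  classical
  induction s using Finset.induction_on with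
  | empty => simp
  | insert a s ha ih =>
    rw [Finset.sum_insert ha]
    exact Set.Nonempty.add (h a (by simp)) (ih fun i hi => h i (by simp [hi]))

theorem sum_mono_sets {d : ℕ} {ι : Type*} (s : Finset ι)
    (K L : ι → Set (Fin d → ℝ)) (h : ∀ i ∈ s, K i ⊆ L i) : (∑ i ∈ s, K i) ⊆ ∑ i ∈ s, L i := by
  classical
  induction s using Finset.induction_on with
  | empty => simp
  | insert a s ha ih =>
    rw [Finset.sum_insert ha, Finset.sum_insert ha]
    exact Set.add_subset_add (h a (by simp)) (ih fun i hi => h i (by simp [hi]))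

theorem maxF_sum_subset_iff {d : ℕ} {ι : Type*} (w w' : Fin d → ℝ) (s : Finset ι)
    (K : ι → Set (Fin d → ℝ)) (h : ∀ i ∈ s, (maxF w (K i)).Nonempty) :
    maxF w (∑ i ∈ s, K i) ⊆ maxF w' (∑ i ∈ s, K i) ↔
      ∀ i ∈ s, maxF w (K i) ⊆ maxF w' (K i) := by
  classical
  constructor
  · intro H i hi x hx
    obtain ⟨y, hy⟩ := sum_nonempty (s.erase i) (fun i => maxF w (K i))
      (fun j hj => h j (Finset.mem_of_mem_erase hj))
    rw [← maxF_sum] at hy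
    rw [← Finset.add_sum_erase s K hi] at H
    have hxy : x + y ∈ maxF w (K i + ∑ x ∈ s.erase i, K x) := by
      rw [maxF_add]; exact Set.add_mem_add hx hy
    exact (maxF_add_mem hx.1 hy.1 (H hxy)).1
  · intro H
    rw [maxF_sum, maxF_sum]
    exact sum_mono_sets _ _ _ H

/-- The simplex `Δ_T`. -/
def simplexOf {m : ℕ} (T : Finset (Fin m)) : Set (Fin m → ℝ) :=
  convexHull ℝ ((fun i => (Pi.single i 1 : Fin m → ℝ)) '' (T : Set (Fin m)))

theorem mem_simplexOf {m : ℕ} (T : Finset (Fin m)) (x : Fin m → ℝ) :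
    x ∈ simplexOf T ↔ (∀ i, 0 ≤ x i) ∧ ∑ i, x i = 1 ∧ ∀ i, i ∉ T → x i = 0 := by
  constructor
  · intro hx
    have hc : Convex ℝ {x : Fin m → ℝ | (∀ i, 0 ≤ x i) ∧ ∑ i, x i = 1 ∧ ∀ i, i ∉ T → x i = 0} := by
      rintro x ⟨h1, h2, h3⟩ y ⟨k1, k2, k3⟩ a b ha hb hab
      refine ⟨fun i => ?_, ?_, fun i hi => ?_⟩
      · have := h1 i; have := k1 i
        simp only [Pi.add_apply, Pi.smul_apply, smul_eq_mul]; positivity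
      · simp only [Pi.add_apply, Pi.smul_apply, smul_eq_mul, Finset.sum_add_distrib,
          ← Finset.mul_sum, h2, k2]; linarith
      · simp [h3 i hi, k3 i hi]
    refine convexHull_min ?_ hc hx
    rintro _ ⟨i, hi, rfl⟩
    refine ⟨fun j => ?_, by simp, fun j hj => ?_⟩
    · by_cases h : j = i
      · subst h; simp
      · simp [h]
    · have : j ≠ i := by rintro rfl; exact hj (by simpa using hi)
      simp [this]
  · rintro ⟨h1, h2, h3⟩
    have hT : ∑ i ∈ T, x i = 1 := by
      rw [← h2]; exact Finset.sum_subset (Finset.subset_univ _) (fun i _ hi => h3 i hi)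
    have hx : x = ∑ i ∈ T, x i • (Pi.single i 1 : Fin m → ℝ) := by
      ext j
      simp only [Finset.sum_apply, Pi.smul_apply, smul_eq_mul, Pi.single_apply, mul_ite, mul_one,
        mul_zero, Finset.sum_ite_eq]
      split_ifs with h
      · rfl
      · exact h3 j h
    rw [hx]
    refine (convex_convexHull ℝ _).sum_mem (fun i _ => h1 i) hT (fun i hi => ?_)
    exact subset_convexHull ℝ _ ⟨i, by simpa using hi, rfl⟩

/-- The argmax of `w` over `T`. -/
noncomputable def am {m : ℕ} (w : Fin m → ℝ) (T : Finset (Fin m)) : Finset (Fin m) := by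
  classical exact T.filter (fun i => ∀ j ∈ T, w j ≤ w i)

theorem mem_am {m : ℕ} (w : Fin m → ℝ) (T : Finset (Fin m)) (i : Fin m) :
    i ∈ am w T ↔ i ∈ T ∧ ∀ j ∈ T, w j ≤ w i := by
  simp [am]

theorem am_nonempty {m : ℕ} (w : Fin m → ℝ) {T : Finset (Fin m)} (h : T.Nonempty) :
    (am w T).Nonempty := by
  obtain ⟨i, hi, h⟩ := T.exists_max_image w h
  exact ⟨i, (mem_am _ _ _).2 ⟨hi, h⟩⟩

theorem single_mem {m : ℕ} {T : Finset (Fin m)} {i : Fin m} (hi : i ∈ T) :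
    (Pi.single i 1 : Fin m → ℝ) ∈ simplexOf T :=
  subset_convexHull ℝ _ ⟨i, by simpa using hi, rfl⟩

theorem single_mem_iff {m : ℕ} {T : Finset (Fin m)} {i : Fin m} :
    (Pi.single i 1 : Fin m → ℝ) ∈ simplexOf T ↔ i ∈ T := by
  refine ⟨fun h => ?_, single_mem⟩
  by_contra hi
  have := ((mem_simplexOf _ _).1 h).2.2 i hi
  simp at this

theorem simplexOf_nonempty {m : ℕ} {T : Finset (Fin m)} (h : T.Nonempty) : (simplexOf T).Nonempty :=
  ⟨_, single_mem h.choose_spec⟩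

theorem simplexOf_subset_iff {m : ℕ} {T U : Finset (Fin m)} : simplexOf T ⊆ simplexOf U ↔ T ⊆ U := by
  constructor
  · intro h i hi
    exact single_mem_iff.1 (h (single_mem hi))
  · intro h
    exact convexHull_mono (Set.image_mono (by exact_mod_cast h))

theorem maxF_simplexOf {m : ℕ} (w : Fin m → ℝ) (T : Finset (Fin m)) :
    maxF w (simplexOf T) = simplexOf (am w T) := by
  rcases T.eq_empty_or_nonempty with rfl | hT
  · ext x
    simp [maxF, simplexOf, am]
  obtain ⟨k, hk⟩ := am_nonempty w hT
  have hk' := (mem_am _ _ _).1 hk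
  have key : ∀ x ∈ simplexOf T, w ⬝ᵥ x = w k - ∑ i, (w k - w i) * x i := by
    intro x hx
    have := ((mem_simplexOf _ _).1 hx).2.1
    simp only [sub_mul, Finset.sum_sub_distrib, ← Finset.mul_sum, this, dotProduct]; ring
  have nn : ∀ x ∈ simplexOf T, ∀ i, 0 ≤ (w k - w i) * x i := by
    intro x hx i
    obtain ⟨h1, h2, h3⟩ := (mem_simplexOf _ _).1 hx
    by_cases hi : i ∈ T
    · exact mul_nonneg (sub_nonneg.2 (hk'.2 i hi)) (h1 i)
    · simp [h3 i hi]
  ext x; constructor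
  · rintro ⟨hx, hm⟩
    obtain ⟨h1, h2, h3⟩ := (mem_simplexOf _ _).1 hx
    refine (mem_simplexOf _ _).2 ⟨h1, h2, fun i hi => ?_⟩
    have h := hm _ (single_mem hk'.1)
    rw [key x hx] at h
    simp only [dotProduct_single, mul_one] at h
    have hz : ∑ i, (w k - w i) * x i = 0 :=
      le_antisymm (by linarith) (Finset.sum_nonneg fun i _ => nn x hx i)
    have := (Finset.sum_eq_zero_iff_of_nonneg fun i _ => nn x hx i).1 hz i (Finset.mem_univ _)
    rcases mul_eq_zero.1 this with h | h
    · by_cases hiT : i ∈ T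
      · exact absurd ((mem_am _ _ _).2 ⟨hiT, fun j hj => by
          have := hk'.2 j hj; linarith⟩) hi
      · exact h3 i hiT
    · exact h
  · intro hx
    have hxT : x ∈ simplexOf T := simplexOf_subset_iff.2 (fun i hi => ((mem_am _ _ _).1 hi).1) hx
    refine ⟨hxT, fun y hy => ?_⟩
    rw [key x hxT, key y hy]
    have hz : ∑ i, (w k - w i) * x i = 0 := by
      refine Finset.sum_eq_zero fun i _ => ?_
      by_cases hi : i ∈ am w T
      · have h1 := ((mem_am _ _ _).1 hi).2 k hk'.1
        have h2 := hk'.2 i ((mem_am _ _ _).1 hi).1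
        rw [le_antisymm h2 h1]; simp
      · rw [((mem_simplexOf _ _).1 hx).2.2 i hi]; simp
    have := Finset.sum_nonneg fun i (_ : i ∈ Finset.univ) => nn y hy i
    linarith

theorem nestohedron_eq (m : ℕ) (B : Finset (Finset (Fin m))) :
    nestohedron m B = ∑ T ∈ B, simplexOf T := rfl

theorem exposed_eq_maxF {d : ℕ} {F P : Set (Fin d → ℝ)} (h : IsFaceOf F P) :
    ∃ w, F = maxF w P := by
  obtain ⟨l, hl⟩ := h.2 h.1
  refine ⟨fun i => l (Pi.single i 1), ?_⟩
  have : ∀ x, l x = (fun i => l (Pi.single i 1)) ⬝ᵥ x := by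
    intro x
    have := LinearMap.pi_apply_eq_sum_univ (l : (Fin d → ℝ) →ₗ[ℝ] ℝ) x
    simp only [ContinuousLinearMap.coe_coe, smul_eq_mul] at this
    rw [this]
    simp only [dotProduct]
    refine Finset.sum_congr rfl fun i _ => ?_
    rw [mul_comm]; congr 2; ext j; simp [Pi.single_apply, eq_comm]
  rw [hl]; ext x
  refine and_congr_right fun _ => forall₂_congr fun y _ => ?_
  rw [this x, this y]

theorem maxF_isFace {d : ℕ} {P : Set (Fin d → ℝ)} {w : Fin d → ℝ} (h : (maxF w P).Nonempty) :
    IsFaceOf (maxF w P) P := by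
  refine ⟨h, fun _ => ⟨LinearMap.toContinuousLinearMap
    { toFun := fun x => w ⬝ᵥ x, map_add' := by intros; rw [dotProduct_add],
      map_smul' := by intros; simp }, ?_⟩⟩
  rfl

theorem combEquiv_of {d₁ d₂ : ℕ} {P : Set (Fin d₁ → ℝ)} {Q : Set (Fin d₂ → ℝ)}
    (hP : ∀ w, (maxF w P).Nonempty) (hQ : ∀ w, (maxF w Q).Nonempty)
    (φ : (Fin d₁ → ℝ) → (Fin d₂ → ℝ))
    (h : ∀ w w', maxF w P ⊆ maxF w' P ↔ maxF (φ w) Q ⊆ maxF (φ w') Q)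
    (hs : ∀ v, ∃ w, maxF (φ w) Q = maxF v Q) : CombEquiv P Q := by
  choose g hg using fun F : {F : Set (Fin d₁ → ℝ) // IsFaceOf F P} => exposed_eq_maxF F.2
  let f : {F : Set (Fin d₁ → ℝ) // IsFaceOf F P} → {G : Set (Fin d₂ → ℝ) // IsFaceOf G Q} :=
    fun F => ⟨maxF (φ (g F)) Q, maxF_isFace (hQ _)⟩
  have hf : ∀ F G, f F ≤ f G ↔ F ≤ G := by
    intro F G
    change maxF (φ (g F)) Q ⊆ maxF (φ (g G)) Q ↔ F.1 ⊆ G.1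
    rw [← h, ← hg, ← hg]
  refine ⟨RelIso.ofSurjective (OrderEmbedding.ofMapLEIff f hf) ?_⟩
  rintro ⟨G, hG⟩
  obtain ⟨v, rfl⟩ := exposed_eq_maxF hG
  obtain ⟨w, hw⟩ := hs v
  refine ⟨⟨maxF w P, maxF_isFace (hP w)⟩, Subtype.ext ?_⟩
  change maxF (φ (g _)) Q = maxF v Q
  rw [← hw]
  have := hg ⟨maxF w P, maxF_isFace (hP w)⟩
  exact Set.Subset.antisymm ((h _ _).1 this.symm.subset) ((h _ _).1 this.subset)

theorem maxF_polyProd {d₁ d₂ : ℕ} (Q : Set (Fin d₁ → ℝ)) (R : Set (Fin d₂ → ℝ))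
    (v : Fin (d₁ + d₂) → ℝ) :
    maxF v (polyProd Q R) = polyProd (maxF (fun i => v (Fin.castAdd d₂ i)) Q)
      (maxF (fun j => v (Fin.natAdd d₁ j)) R) := by
  have key : ∀ x : Fin (d₁ + d₂) → ℝ, v ⬝ᵥ x =
      (fun i => v (Fin.castAdd d₂ i)) ⬝ᵥ (fun i => x (Fin.castAdd d₂ i)) +
      (fun j => v (Fin.natAdd d₁ j)) ⬝ᵥ (fun j => x (Fin.natAdd d₁ j)) := by
    intro x; simp only [dotProduct, Fin.sum_univ_add]
  ext x; constructor
  · rintro ⟨⟨h1, h2⟩, hm⟩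
    refine ⟨⟨h1, fun y hy => ?_⟩, ⟨h2, fun y hy => ?_⟩⟩
    · have := hm (Fin.append y (fun j => x (Fin.natAdd d₁ j)))
        ⟨by simpa using hy, by simpa using h2⟩
      rw [key, key x] at this
      simp only [Fin.append_left, Fin.append_right] at this
      linarith
    · have := hm (Fin.append (fun i => x (Fin.castAdd d₂ i)) y)
        ⟨by simpa using h1, by simpa using hy⟩
      rw [key, key x] at this
      simp only [Fin.append_left, Fin.append_right] at this
      linarith
  · rintro ⟨⟨h1, k1⟩, ⟨h2, k2⟩⟩
    refine ⟨⟨h1, h2⟩, fun y hy => ?_⟩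
    rw [key, key x]
    exact add_le_add (k1 _ hy.1) (k2 _ hy.2)

theorem polyProd_nonempty {d₁ d₂ : ℕ} {Q : Set (Fin d₁ → ℝ)} {R : Set (Fin d₂ → ℝ)}
    (hQ : Q.Nonempty) (hR : R.Nonempty) : (polyProd Q R).Nonempty := by
  obtain ⟨q, hq⟩ := hQ
  obtain ⟨r, hr⟩ := hR
  exact ⟨Fin.append q r, by simpa using hq, by simpa using hr⟩

theorem polyProd_subset_iff {d₁ d₂ : ℕ} {Q Q' : Set (Fin d₁ → ℝ)} {R R' : Set (Fin d₂ → ℝ)}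
    (hQ : Q.Nonempty) (hR : R.Nonempty) :
    polyProd Q R ⊆ polyProd Q' R' ↔ Q ⊆ Q' ∧ R ⊆ R' := by
  obtain ⟨q, hq⟩ := hQ
  obtain ⟨r, hr⟩ := hR
  constructor
  · intro h
    constructor
    · intro x hx
      have := (h (show Fin.append x r ∈ polyProd Q R from
        ⟨by simpa using hx, by simpa using hr⟩)).1
      simpa using this
    · intro x hx
      have := (h (show Fin.append q x ∈ polyProd Q R from
        ⟨by simpa using hq, by simpa using hx⟩)).2
      simpa using this
  · rintro ⟨h1, h2⟩ x ⟨k1, k2⟩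
    exact ⟨h1 k1, h2 k2⟩

theorem restrict_building {m : ℕ} {B : Finset (Finset (Fin m))}
    (hB : IsConnectedBuildingSet m B) {S : Finset (Fin m)} (hS : S ∈ B) :
    IsBuildingSetOn S (restrictBS B S) := by
  constructor
  · intro T hT; exact (Finset.mem_filter.1 hT).2
  · intro T hT; exact hB.nonempty_mem T (Finset.mem_filter.1 hT).1
  · intro i hi; exact Finset.mem_filter.2 ⟨hB.singleton_mem i (Finset.mem_univ _), by simpa⟩
  · exact Finset.mem_filter.2 ⟨hS, Finset.Subset.refl _⟩
  · intro T hT U hU h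
    obtain ⟨h1, h2⟩ := Finset.mem_filter.1 hT
    obtain ⟨k1, k2⟩ := Finset.mem_filter.1 hU
    exact Finset.mem_filter.2 ⟨hB.union_mem _ h1 _ k1 h, Finset.union_subset h2 k2⟩

theorem mem_contract {m : ℕ} {B : Finset (Finset (Fin m))} {S T : Finset (Fin m)} :
    T ∈ contractBS B S ↔ ∃ U ∈ B, ¬ U ⊆ S ∧ U \ S = T := by
  simp [contractBS, and_assoc]

theorem contract_building {m : ℕ} {B : Finset (Finset (Fin m))}
    (hB : IsConnectedBuildingSet m B) {S : Finset (Fin m)} (hSne : S ≠ Finset.univ) :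
    IsBuildingSetOn (Finset.univ \ S) (contractBS B S) := by
  constructor
  · intro T hT
    obtain ⟨U, hU, hUS, rfl⟩ := mem_contract.1 hT
    exact Finset.sdiff_subset_sdiff (Finset.subset_univ _) (Finset.Subset.refl _)
  · intro T hT
    obtain ⟨U, hU, hUS, rfl⟩ := mem_contract.1 hT
    exact Finset.sdiff_nonempty.2 hUS
  · intro i hi
    have hi' : i ∉ S := (Finset.mem_sdiff.1 hi).2
    refine mem_contract.2 ⟨{i}, hB.singleton_mem i (Finset.mem_univ _), by simpa, ?_⟩
    simpa using hi'
  · exact mem_contract.2 ⟨_, hB.ground_mem, fun h => hSne (Finset.univ_subset_iff.1 h), rfl⟩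
  · intro T hT T' hT' h
    obtain ⟨U, hU, hUS, rfl⟩ := mem_contract.1 hT
    obtain ⟨U', hU', hUS', rfl⟩ := mem_contract.1 hT'
    refine mem_contract.2 ⟨U ∪ U', hB.union_mem _ hU _ hU' ?_, ?_, ?_⟩
    · obtain ⟨x, hx⟩ := h
      simp only [Finset.mem_inter, Finset.mem_sdiff] at hx
      exact ⟨x, by simp [hx.1.1, hx.2.1]⟩
    · exact fun h => hUS (Finset.union_subset_left h)
    · exact Finset.union_sdiff_distrib _ _ _

/-- The functional `-1_S`. -/
noncomputable def ind {m : ℕ} (S : Finset (Fin m)) : Fin m → ℝ := fun i => if i ∈ S then -1 else 0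

theorem ind_dot {m : ℕ} (S : Finset (Fin m)) (x : Fin m → ℝ) : ind S ⬝ᵥ x = - ∑ i ∈ S, x i := by
  simp [ind, dotProduct, Finset.sum_ite_mem]

theorem minFace_eq (m : ℕ) (B : Finset (Finset (Fin m))) (S : Finset (Fin m)) :
    minFace m B S = maxF (ind S) (nestohedron m B) := by
  ext x; simp [minFace, maxF, ind_dot]

theorem am_ind {m : ℕ} (S T : Finset (Fin m)) :
    am (ind S) T = if T ⊆ S then T else T \ S := by
  ext i
  rw [mem_am]
  split_ifs with h
  · constructor
    · exact fun h => h.1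
    · intro hi; refine ⟨hi, fun j hj => ?_⟩
      simp [ind, h hi, h hj]
  · obtain ⟨k, hk, hkS⟩ := Finset.not_subset.1 h
    rw [Finset.mem_sdiff]
    constructor
    · rintro ⟨hi, h⟩
      refine ⟨hi, fun hiS => ?_⟩
      have := h k hk
      simp only [ind, hkS, hiS, if_true, if_false] at this
      linarith
    · rintro ⟨hi, hiS⟩
      refine ⟨hi, fun j hj => ?_⟩
      simp only [ind, hiS, if_false]
      split_ifs <;> norm_num

theorem maxF_nesto {m : ℕ} (B : Finset (Finset (Fin m))) (w : Fin m → ℝ) :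
    maxF w (nestohedron m B) = ∑ T ∈ B, simplexOf (am w T) := by
  rw [nestohedron_eq, maxF_sum]
  simp only [maxF_simplexOf]

theorem maxF_sum_simplexOf_nonempty {m : ℕ} {ι : Type*} (s : Finset ι) (A : ι → Finset (Fin m))
    (hA : ∀ i ∈ s, (A i).Nonempty) (w : Fin m → ℝ) :
    (maxF w (∑ i ∈ s, simplexOf (A i))).Nonempty := by
  rw [maxF_sum]
  refine sum_nonempty _ _ fun i hi => ?_
  rw [maxF_simplexOf]
  exact simplexOf_nonempty (am_nonempty _ (hA i hi))

theorem maxF_sum_simplexOf_iff {m : ℕ} {ι : Type*} (s : Finset ι) (A : ι → Finset (Fin m))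
    (hA : ∀ i ∈ s, (A i).Nonempty) (w w' : Fin m → ℝ) :
    maxF w (∑ i ∈ s, simplexOf (A i)) ⊆ maxF w' (∑ i ∈ s, simplexOf (A i)) ↔
      ∀ i ∈ s, am w (A i) ⊆ am w' (A i) := by
  rw [maxF_sum_subset_iff]
  · simp only [maxF_simplexOf, simplexOf_subset_iff]
  · intro i hi; rw [maxF_simplexOf]; exact simplexOf_nonempty (am_nonempty _ (hA i hi))

theorem am_congr {m : ℕ} {w w' : Fin m → ℝ} {T : Finset (Fin m)} (h : ∀ i ∈ T, w i = w' i) :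
    am w T = am w' T := by
  ext i
  simp only [mem_am]
  refine and_congr_right fun hi => forall₂_congr fun j hj => ?_
  rw [h i hi, h j hj]

theorem comb_main {m : ℕ} {B : Finset (Finset (Fin m))}
    (hB : IsConnectedBuildingSet m B) {S : Finset (Fin m)} (hS : S ∈ B)
    (hSne : S ≠ Finset.univ) :
    CombEquiv (minFace m B S)
      (polyProd (nestohedron m (restrictBS B S)) (nestohedron m (contractBS B S))) := by
  have hR := restrict_building hB hS
  have hC := contract_building hB hSne
  have hA : ∀ T ∈ B, (am (ind S) T).Nonempty := fun T hT => am_nonempty _ (hB.nonempty_mem T hT)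
  have nR : ∀ w, (maxF w (nestohedron m (restrictBS B S))).Nonempty :=
    fun w => maxF_sum_simplexOf_nonempty _ (fun T => T) hR.nonempty_mem w
  have nC : ∀ w, (maxF w (nestohedron m (contractBS B S))).Nonempty :=
    fun w => maxF_sum_simplexOf_nonempty _ (fun T => T) hC.nonempty_mem w
  rw [minFace_eq, maxF_nesto]
  refine combEquiv_of (maxF_sum_simplexOf_nonempty _ _ hA) ?_ (fun w => Fin.append w w) ?_ ?_
  · intro w; rw [maxF_polyProd]; exact polyProd_nonempty (nR _) (nC _)
  · intro w w'
    rw [maxF_sum_simplexOf_iff _ _ hA, maxF_polyProd, maxF_polyProd, polyProd_subset_iff (nR _) (nC _)]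
    simp only [Fin.append_left, Fin.append_right]
    rw [nestohedron_eq, nestohedron_eq, maxF_sum_simplexOf_iff _ (fun T => T) hR.nonempty_mem,
      maxF_sum_simplexOf_iff _ (fun T => T) hC.nonempty_mem]
    constructor
    · intro h
      constructor
      · intro T hT
        obtain ⟨h1, h2⟩ := Finset.mem_filter.1 hT
        have := h T h1
        rwa [am_ind, if_pos h2] at this
      · intro T hT
        obtain ⟨U, hU, hUS, rfl⟩ := mem_contract.1 hT
        have := h U hU
        rwa [am_ind, if_neg hUS] at this
    · rintro ⟨h1, h2⟩ T hT
      rw [am_ind]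
      split_ifs with h
      · exact h1 T (Finset.mem_filter.2 ⟨hT, h⟩)
      · exact h2 _ (mem_contract.2 ⟨T, hT, h, rfl⟩)
  · intro v
    refine ⟨fun i => if i ∈ S then v (Fin.castAdd m i) else v (Fin.natAdd m i), ?_⟩
    rw [maxF_polyProd, maxF_polyProd]
    simp only [Fin.append_left, Fin.append_right]
    rw [maxF_nesto, maxF_nesto, maxF_nesto, maxF_nesto]
    congr 1
    · refine Finset.sum_congr rfl fun T hT => ?_
      congr 1
      refine am_congr fun i hi => ?_
      rw [if_pos (hR.subset_ground T hT hi)]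
    · refine Finset.sum_congr rfl fun T hT => ?_
      congr 1
      refine am_congr fun i hi => ?_
      rw [if_neg (Finset.mem_sdiff.1 (hC.subset_ground T hT hi)).2]

theorem dir_mem {m : ℕ} {ι : Type*} (s : Finset ι) (A : ι → Finset (Fin m))
    (hA : ∀ i ∈ s, (A i).Nonempty) {t : ι} (ht : t ∈ s) {i j : Fin m} (hi : i ∈ A t)
    (hj : j ∈ A t) :
    (Pi.single i 1 - Pi.single j 1 : Fin m → ℝ) ∈
      (affineSpan ℝ (∑ t ∈ s, simplexOf (A t))).direction := by
  classical
  obtain ⟨y, hy⟩ := sum_nonempty (s.erase t) (fun t => simplexOf (A t))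
    (fun j hj => simplexOf_nonempty (hA j (Finset.mem_of_mem_erase hj)))
  rw [← Finset.add_sum_erase s _ ht]
  have h1 := subset_affineSpan ℝ _ (Set.add_mem_add (single_mem hi) hy)
  have h2 := subset_affineSpan ℝ _ (Set.add_mem_add (single_mem hj) hy)
  have := AffineSubspace.vsub_mem_direction h1 h2
  simpa using this

theorem dir_le {m : ℕ} {E : Type*} [AddCommGroup E] [Module ℝ E] (P : Set (Fin m → ℝ))
    (L : (Fin m → ℝ) →ₗ[ℝ] E) (h : ∀ x ∈ P, ∀ y ∈ P, L x = L y) :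
    (affineSpan ℝ P).direction ≤ LinearMap.ker L := by
  rw [direction_affineSpan, vectorSpan_def, Submodule.span_le]
  rintro _ ⟨x, hx, y, hy, rfl⟩
  simp [h x hx y hy]

/-- The functional `x ↦ ∑_{i ∈ S} x_i`. -/
noncomputable def sumOn {m : ℕ} (S : Finset (Fin m)) : (Fin m → ℝ) →ₗ[ℝ] ℝ :=
  ∑ i ∈ S, LinearMap.proj i

theorem sumOn_apply {m : ℕ} (S : Finset (Fin m)) (x : Fin m → ℝ) :
    sumOn S x = ∑ i ∈ S, x i := by simp [sumOn]

theorem sumOn_single {m : ℕ} (S : Finset (Fin m)) (i : Fin m) (c : ℝ) :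
    sumOn S (Pi.single i c) = if i ∈ S then c else 0 := by
  simp [sumOn, Pi.single_apply]

theorem sum_const_of_mem {m : ℕ} {ι : Type*} (s : Finset ι) (A : ι → Finset (Fin m))
    {x : Fin m → ℝ} (hx : x ∈ ∑ t ∈ s, simplexOf (A t)) : ∑ i, x i = s.card := by
  classical
  induction s using Finset.induction_on generalizing x with
  | empty => simp at hx; subst hx; simp
  | insert a s ha ih =>
    rw [Finset.sum_insert ha] at hx
    obtain ⟨y, hy, z, hz, rfl⟩ := Set.mem_add.1 hx
    simp only [Pi.add_apply, Finset.sum_add_distrib, ih hz, ((mem_simplexOf _ _).1 hy).2.1,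
      Finset.card_insert_of_notMem ha]
    push_cast; ring

theorem decomp {m : ℕ} (D : Submodule ℝ (Fin m → ℝ)) (S : Finset (Fin m)) {a : Fin m}
    (h : ∀ i ∈ S, (Pi.single i 1 - Pi.single a 1 : Fin m → ℝ) ∈ D) (x : Fin m → ℝ)
    (hx : sumOn S x = 0) : ∑ i ∈ S, x i • (Pi.single i 1 : Fin m → ℝ) ∈ D := by
  have : ∑ i ∈ S, x i • (Pi.single i 1 : Fin m → ℝ) =
      ∑ i ∈ S, x i • (Pi.single i 1 - Pi.single a 1 : Fin m → ℝ) := by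
    simp only [smul_sub, Finset.sum_sub_distrib, ← Finset.sum_smul]
    rw [← sumOn_apply, hx]; simp
  rw [this]
  exact D.sum_mem fun i hi => D.smul_mem _ (h i hi)

theorem dim_nesto {m : ℕ} (hm : 2 ≤ m) {B : Finset (Finset (Fin m))}
    (hB : IsConnectedBuildingSet m B) : polyDim (nestohedron m B) + 1 = m := by
  have hd : (affineSpan ℝ (nestohedron m B)).direction =
      LinearMap.ker (sumOn (Finset.univ : Finset (Fin m))) := by
    apply le_antisymm
    · apply dir_le
      intro x hx y hy
      rw [sumOn_apply, sumOn_apply, sum_const_of_mem _ (fun T => T) hx,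
        sum_const_of_mem _ (fun T => T) hy]
    · intro x hx
      have := decomp (affineSpan ℝ (nestohedron m B)).direction Finset.univ
        (a := ⟨0, by omega⟩) (fun i _ => dir_mem B (fun T => T) hB.nonempty_mem hB.ground_mem
          (Finset.mem_univ _) (Finset.mem_univ _)) x hx
      convert this using 1
      ext j; simp [Pi.single_apply]
  have hs : LinearMap.range (sumOn (Finset.univ : Finset (Fin m))) = ⊤ := by
    rw [LinearMap.range_eq_top]
    intro c
    exact ⟨Pi.single ⟨0, by omega⟩ c, by simp [sumOn_single]⟩
  have := LinearMap.finrank_range_add_finrank_ker (sumOn (Finset.univ : Finset (Fin m)))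
  rw [hs, finrank_top] at this
  simp at this
  rw [polyDim, hd]; omega

theorem dim_minFace {m : ℕ} {B : Finset (Finset (Fin m))}
    (hB : IsConnectedBuildingSet m B) {S : Finset (Fin m)} (hS : S ∈ B)
    (hSne : S ≠ Finset.univ) : polyDim (minFace m B S) + 2 = m := by
  have hA : ∀ T ∈ B, (am (ind S) T).Nonempty := fun T hT => am_nonempty _ (hB.nonempty_mem T hT)
  have hnot : ¬ Finset.univ ⊆ S := fun h => hSne (Finset.univ_subset_iff.1 h)
  obtain ⟨a, ha⟩ := hB.nonempty_mem S hS
  obtain ⟨b, -, hb⟩ := Finset.not_subset.1 hnot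
  have hd : (affineSpan ℝ (minFace m B S)).direction =
      LinearMap.ker ((sumOn S).prod (sumOn Sᶜ)) := by
    apply le_antisymm
    · apply dir_le
      intro x hx y hy
      have h1 : sumOn S x = sumOn S y := by
        rw [sumOn_apply, sumOn_apply]
        exact le_antisymm (hx.2 y hy.1) (hy.2 x hx.1)
      have h2 : ∑ i, x i = ∑ i, y i := by
        rw [sum_const_of_mem _ (fun T => T) hx.1, sum_const_of_mem _ (fun T => T) hy.1]
      rw [← Finset.sum_add_sum_compl S, ← Finset.sum_add_sum_compl S y] at h2
      refine Prod.ext h1 ?_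
      change sumOn Sᶜ x = sumOn Sᶜ y
      simp only [sumOn_apply] at *
      linarith
    · intro x hx
      replace hx : sumOn S x = 0 ∧ sumOn Sᶜ x = 0 := Prod.mk.inj (LinearMap.mem_ker.1 hx)
      rw [minFace_eq, maxF_nesto]
      have h1 := decomp (affineSpan ℝ (∑ T ∈ B, simplexOf (am (ind S) T))).direction S
        (a := a) (fun i hi => dir_mem B _ hA hS (by rw [am_ind, if_pos (by rfl)]; exact hi)
          (by rw [am_ind, if_pos (by rfl)]; exact ha)) x hx.1
      have h2 := decomp (affineSpan ℝ (∑ T ∈ B, simplexOf (am (ind S) T))).direction Sᶜ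
        (a := b) (fun i hi => dir_mem B _ hA hB.ground_mem
          (by rw [am_ind, if_neg hnot]; simpa using hi)
          (by rw [am_ind, if_neg hnot]; simpa using hb)) x hx.2
      have := Submodule.add_mem _ h1 h2
      rw [Finset.sum_add_sum_compl] at this
      convert this using 1
      ext j; simp [Pi.single_apply]
  have hs : LinearMap.range ((sumOn S).prod (sumOn Sᶜ)) = ⊤ := by
    rw [LinearMap.range_eq_top]
    rintro ⟨c, e⟩
    refine ⟨Pi.single a c + Pi.single b e, ?_⟩
    simp [sumOn_single, ha, hb]
  have := LinearMap.finrank_range_add_finrank_ker ((sumOn S).prod (sumOn Sᶜ))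
  rw [hs, finrank_top] at this
  simp at this
  rw [polyDim, hd]; omega

theorem minFace_isFacet {m : ℕ} (hm : 2 ≤ m) {B : Finset (Finset (Fin m))}
    (hB : IsConnectedBuildingSet m B) {S : Finset (Fin m)} (hS : S ∈ B)
    (hSne : S ≠ Finset.univ) : IsFacetOf (minFace m B S) (nestohedron m B) := by
  refine ⟨?_, ?_⟩
  · rw [minFace_eq]
    exact maxF_isFace (maxF_sum_simplexOf_nonempty _ (fun T => T) hB.nonempty_mem _)
  · have := dim_nesto hm hB
    have := dim_minFace hB hS hSne
    omega

theorem minFace_inj {m : ℕ} {B : Finset (Finset (Fin m))}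
    (hB : IsConnectedBuildingSet m B) {S S' : Finset (Fin m)}
    (h1 : S ≠ Finset.univ) (h2 : S' ≠ Finset.univ)
    (h : minFace m B S ⊆ minFace m B S') : S' ⊆ S := by
  rw [minFace_eq, minFace_eq, nestohedron_eq,
    maxF_sum_simplexOf_iff _ (fun T => T) hB.nonempty_mem] at h
  have := h _ hB.ground_mem
  rw [am_ind, am_ind, if_neg (fun h => h1 (Finset.univ_subset_iff.1 h)),
    if_neg (fun h => h2 (Finset.univ_subset_iff.1 h))] at this
  intro i hi
  by_contra hn
  have := this (show i ∈ Finset.univ \ S by simpa using hn)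
  simp [hi] at this

theorem facet_surj {m : ℕ} (hm : 2 ≤ m) {B : Finset (Finset (Fin m))}
    (hB : IsConnectedBuildingSet m B) {F : Set (Fin m → ℝ)}
    (hF : IsFacetOf F (nestohedron m B)) :
    ∃ S' ∈ B, S' ≠ Finset.univ ∧ minFace m B S' = F := by
  classical
  obtain ⟨w, hw⟩ := exposed_eq_maxF hF.1
  obtain ⟨k, hk⟩ := am_nonempty w (hB.nonempty_mem _ hB.ground_mem)
  have hk' := ((mem_am _ _ _).1 hk).2
  -- `U` is the set of non-maximal coordinates
  set U : Finset (Fin m) := Finset.univ.filter (fun i => w i < w k) with hU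
  have hUne : U.Nonempty := by
    by_contra hne
    rw [Finset.not_nonempty_iff_eq_empty] at hne
    have hc : ∀ i, w i = w k := by
      intro i
      refine le_antisymm (hk' i (Finset.mem_univ _)) (not_lt.1 fun hlt => ?_)
      have : i ∈ U := by simp [hU, hlt]
      rw [hne] at this; simp at this
    have : F = nestohedron m B := by
      rw [hw, maxF_nesto, nestohedron_eq]
      refine Finset.sum_congr rfl fun T _ => ?_
      congr 1
      ext i; simp [mem_am, hc]
    have h2 := hF.2
    rw [this] at h2; omega
  obtain ⟨u, hu⟩ := hUne
  obtain ⟨S, hSmax⟩ := (B.filter (· ⊆ U)).exists_maximal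
    ⟨{u}, Finset.mem_filter.2 ⟨hB.singleton_mem u (Finset.mem_univ _), by simpa using hu⟩⟩
  obtain ⟨hSB, hSU⟩ := Finset.mem_filter.1 hSmax.1
  have hkU : k ∉ U := by simp [hU]
  have hSne : S ≠ Finset.univ := by
    rintro rfl; exact hkU (hSU (Finset.mem_univ _))
  refine ⟨S, hSB, hSne, ?_⟩
  have hsub : F ⊆ minFace m B S := by
    rw [hw, minFace_eq, nestohedron_eq, maxF_sum_simplexOf_iff _ (fun T => T) hB.nonempty_mem]
    intro T hT i hi
    rw [mem_am] at hi
    rw [am_ind]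
    split_ifs with hTS
    · exact hi.1
    · refine Finset.mem_sdiff.2 ⟨hi.1, fun hiS => ?_⟩
      have hun := hB.union_mem T hT S hSB ⟨i, Finset.mem_inter.2 ⟨hi.1, hiS⟩⟩
      by_cases hTU : T ⊆ U
      · have := hSmax.2 (Finset.mem_filter.2 ⟨hun, Finset.union_subset hTU hSU⟩)
          Finset.subset_union_right
        exact hTS (Finset.subset_union_left.trans this)
      · obtain ⟨j, hj, hjU⟩ := Finset.not_subset.1 hTU
        have h1 := hi.2 j hj
        have h2 : w i < w k := by simpa [hU] using hSU hiS
        have h3 : ¬ w j < w k := by simpa [hU] using hjU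
        linarith
  have hdim : polyDim F = polyDim (minFace m B S) := by
    have h1 := hF.2
    have h2 := (minFace_isFacet hm hB hSB hSne).2
    omega
  obtain ⟨p, hp⟩ := hF.1.1
  have hle : affineSpan ℝ F ≤ affineSpan ℝ (minFace m B S) := affineSpan_mono ℝ hsub
  have hdir : (affineSpan ℝ F).direction = (affineSpan ℝ (minFace m B S)).direction :=
    Submodule.eq_of_le_of_finrank_eq (AffineSubspace.direction_le hle) hdim
  refine Set.Subset.antisymm ?_ hsub
  intro x hx
  have hxp : x - p ∈ (affineSpan ℝ F).direction := by
    rw [hdir]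
    exact AffineSubspace.vsub_mem_direction (subset_affineSpan ℝ _ hx)
      (subset_affineSpan ℝ _ (hsub hp))
  have hker := dir_le F (dotProductBilin ℝ ℝ w) (fun y hy z hz => by
    rw [hw] at hy hz
    exact le_antisymm (hz.2 y hy.1) (hy.2 z hz.1)) hxp
  have heq : w ⬝ᵥ x = w ⬝ᵥ p := by
    have : w ⬝ᵥ (x - p) = 0 := hker
    rw [dotProduct_sub] at this; linarith
  rw [hw] at hp ⊢
  exact ⟨hx.1, fun y hy => by rw [heq]; exact hp.2 y hy⟩

/-- for `S ∈ B`, `S ≠ [m]`, the minimizing set of `x ↦ ∑_{i ∈ S} x i`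
on the nestohedron `P_B` is a facet, combinatorially equivalent to
`P_{B|_S} × P_{B/S}`, and `S ↦ (this facet)` is a bijection from `B \ {[m]}` to the
set of facets of `P_B`. -/
theorem nestohedron_facets (m : ℕ) (hm : 2 ≤ m) (B : Finset (Finset (Fin m)))
    (hB : IsConnectedBuildingSet m B) (S : Finset (Fin m)) (hS : S ∈ B)
    (hSne : S ≠ Finset.univ) :
    IsFacetOf (minFace m B S) (nestohedron m B) ∧
    IsBuildingSetOn S (restrictBS B S) ∧
    IsBuildingSetOn (Finset.univ \ S) (contractBS B S) ∧
    CombEquiv (minFace m B S)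
      (polyProd (nestohedron m (restrictBS B S)) (nestohedron m (contractBS B S))) ∧
    (∀ S₁ ∈ B, S₁ ≠ Finset.univ → ∀ S₂ ∈ B, S₂ ≠ Finset.univ →
      minFace m B S₁ = minFace m B S₂ → S₁ = S₂) ∧
    (∀ F, IsFacetOf F (nestohedron m B) →
      ∃ S' ∈ B, S' ≠ Finset.univ ∧ minFace m B S' = F) := by
  exact ⟨minFace_isFacet hm hB hS hSne, restrict_building hB hS, contract_building hB hSne,
    comb_main hB hS hSne,
    fun S₁ _ h1 S₂ _ h2 h => Finset.Subset.antisymm (minFace_inj hB h2 h1 h.symm.subset)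
      (minFace_inj hB h1 h2 h.subset),
    fun F hF => facet_surj hm hB hF⟩

end GalD
end

section
/- Let n ≥ 4 and let P be a polytope realizing the type D_n model via a bijection φ from M_n to the facets of P. Then P is not combinatorially equivalent to any product Q × R of two polytopes each of dimension at least 1, and P has at least 2n + 3 facets each of which is not combinatorially equivalent to any such nontrivial product. -/
open Pointwise

namespace GalD

/-! ### Faces of polytopes -/

section Polytopes

variable {d : ℕ}

lemma isFaceOf_iff {F P : Set (Fin d → ℝ)} :
    IsFaceOf F P ↔ F.Nonempty ∧ ∃ (l : (Fin d → ℝ) →L[ℝ] ℝ) (c : ℝ),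
      (∀ y ∈ P, l y ≤ c) ∧ F = {x | x ∈ P ∧ l x = c} := by
  constructor
  · rintro ⟨⟨g, hg⟩, h⟩
    obtain ⟨l, hl⟩ := h ⟨g, hg⟩
    refine ⟨⟨g, hg⟩, l, l g, ?_, ?_⟩
    · rw [hl] at hg
      exact hg.2
    · rw [hl] at hg
      ext x
      constructor
      · intro hx
        rw [hl] at hx
        exact ⟨hx.1, le_antisymm (hg.2 x hx.1) (hx.2 g hg.1)⟩
      · rintro ⟨hx, hx'⟩
        rw [hl]
        exact ⟨hx, fun y hy => by rw [hx']; exact hg.2 y hy⟩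
  · rintro ⟨⟨g, hg⟩, l, c, hc, hF⟩
    refine ⟨⟨g, hg⟩, fun _ => ⟨l, ?_⟩⟩
    rw [hF] at hg
    rw [hF]
    ext x
    constructor
    · rintro ⟨hx, hx'⟩
      exact ⟨hx, fun y hy => by rw [hx']; exact hc y hy⟩
    · rintro ⟨hx, hx'⟩
      exact ⟨hx, le_antisymm (hc x hx) (by rw [← hg.2]; exact hx' g hg.1)⟩

lemma IsFaceOf.sub {F P : Set (Fin d → ℝ)} (h : IsFaceOf F P) : F ⊆ P := h.2.subset

lemma isFaceOf_self {P : Set (Fin d → ℝ)} (h : P.Nonempty) : IsFaceOf P P :=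
  ⟨h, IsExposed.refl P⟩

lemma IsFaceOf.inter {F G P : Set (Fin d → ℝ)} (hF : IsFaceOf F P) (hG : IsFaceOf G P)
    (h : (F ∩ G).Nonempty) : IsFaceOf (F ∩ G) P :=
  ⟨h, hF.2.inter hG.2⟩

lemma IsFaceOf.of_sub {F G P : Set (Fin d → ℝ)} (hG : IsFaceOf G P) (hF : IsFaceOf F P)
    (h : G ⊆ F) : IsFaceOf G F :=
  ⟨hG.1, hG.2.mono hF.sub h⟩

lemma IsPolytope.isCompact {P : Set (Fin d → ℝ)} (hP : IsPolytope P) : IsCompact P := by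
  obtain ⟨V, rfl⟩ := hP
  exact V.finite_toSet.isCompact_convexHull ℝ

/-- A face of a polytope is the convex hull of the generators it contains. -/
lemma IsFaceOf.eq_hull {V : Finset (Fin d → ℝ)} {F : Set (Fin d → ℝ)}
    (hF : IsFaceOf F (convexHull ℝ (V : Set (Fin d → ℝ)))) :
    F = convexHull ℝ ((V : Set (Fin d → ℝ)) ∩ F) := by
  have hc : IsCompact (convexHull ℝ (V : Set (Fin d → ℝ))) := V.finite_toSet.isCompact_convexHull ℝ
  have hcF : IsCompact F := hF.2.isCompact hc
  have hconv : Convex ℝ F := hF.2.convex (convex_convexHull ℝ _)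
  apply Set.Subset.antisymm
  · have h1 := closure_convexHull_extremePoints hcF hconv
    have h2 : F.extremePoints ℝ ⊆ (V : Set (Fin d → ℝ)) ∩ F := by
      intro x hx
      exact ⟨extremePoints_convexHull_subset
        (hF.2.isExtreme.extremePoints_subset_extremePoints hx), hx.1⟩
    have h3 : IsClosed (convexHull ℝ ((V : Set (Fin d → ℝ)) ∩ F)) :=
      ((V.finite_toSet.inter_of_left F).isCompact_convexHull ℝ).isClosed
    calc F = closure (convexHull ℝ (F.extremePoints ℝ)) := h1.symm
      _ ⊆ _ := closure_minimal (convexHull_mono h2) h3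
  · exact convexHull_min Set.inter_subset_right hconv

lemma IsFaceOf.isPolytope {F P : Set (Fin d → ℝ)} (hP : IsPolytope P) (hF : IsFaceOf F P) :
    IsPolytope F := by
  classical
  obtain ⟨V, rfl⟩ := hP
  refine ⟨(V.finite_toSet.inter_of_left F).toFinset, ?_⟩
  rw [Set.Finite.coe_toFinset]
  exact hF.eq_hull

lemma face_ext {V : Finset (Fin d → ℝ)} {F G : Set (Fin d → ℝ)}
    (hF : IsFaceOf F (convexHull ℝ (V : Set (Fin d → ℝ))))
    (hG : IsFaceOf G (convexHull ℝ (V : Set (Fin d → ℝ))))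
    (h : ∀ w ∈ V, w ∈ F ↔ w ∈ G) : F = G := by
  rw [hF.eq_hull, hG.eq_hull]
  congr 1
  ext w
  simp only [Set.mem_inter_iff, Finset.mem_coe]
  constructor
  · rintro ⟨h1, h2⟩
    exact ⟨h1, (h w h1).1 h2⟩
  · rintro ⟨h1, h2⟩
    exact ⟨h1, (h w h1).2 h2⟩

lemma finite_faces {P : Set (Fin d → ℝ)} (hP : IsPolytope P) :
    {F | IsFaceOf F P}.Finite := by
  obtain ⟨V, rfl⟩ := hP
  refine Set.Finite.of_finite_image (f := fun F => (V : Set (Fin d → ℝ)) ∩ F) ?_ ?_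
  · refine Set.Finite.subset V.finite_toSet.powerset ?_
    rintro _ ⟨F, -, rfl⟩
    exact Set.inter_subset_left
  · intro F hF G hG h
    refine face_ext hF hG fun w hw => ?_
    have := Set.ext_iff.1 h w
    simpa [hw] using this

lemma le_on_hull {V : Finset (Fin d → ℝ)} {l : (Fin d → ℝ) →L[ℝ] ℝ} {c : ℝ}
    (h : ∀ w ∈ V, l w ≤ c) : ∀ y ∈ convexHull ℝ (V : Set (Fin d → ℝ)), l y ≤ c := by
  have : convexHull ℝ (V : Set (Fin d → ℝ)) ⊆ {y | l y ≤ c} :=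
    convexHull_min h (convex_halfSpace_le (l : (Fin d → ℝ) →ₗ[ℝ] ℝ).isLinear c)
  exact this

/-- Faces of faces are faces. -/
lemma IsFaceOf.trans {G F P : Set (Fin d → ℝ)} (hP : IsPolytope P) (hG : IsFaceOf G F)
    (hF : IsFaceOf F P) : IsFaceOf G P := by
  classical
  obtain ⟨V, rfl⟩ := hP
  obtain ⟨_, l, c, hl, hFe⟩ := isFaceOf_iff.1 hF
  obtain ⟨⟨g, hg⟩, m, b, hm, hGe⟩ := isFaceOf_iff.1 hG
  -- choose a small positive ε
  have hε : ∃ ε : ℝ, 0 < ε ∧ ∀ w ∈ V, l w < c → l w + ε * m w < c + ε * b := by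
    have : ∀ᶠ ε : ℝ in nhdsWithin 0 (Set.Ioi 0),
        ∀ w ∈ V, l w < c → l w + ε * m w < c + ε * b := by
      rw [Filter.eventually_all_finset]
      intro w _
      by_cases hw : l w < c
      · have h1 : Filter.Tendsto (fun ε : ℝ => l w + ε * m w - (c + ε * b))
            (nhdsWithin 0 (Set.Ioi 0)) (nhds (l w + 0 * m w - (c + 0 * b))) := by
          apply Filter.Tendsto.mono_left _ nhdsWithin_le_nhds
          apply Continuous.tendsto
          fun_prop
        have h2 : l w + 0 * m w - (c + 0 * b) < 0 := by linarith
        filter_upwards [h1.eventually_lt_const h2] with ε h3 _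
        linarith
      · exact Filter.Eventually.of_forall fun _ h => absurd h hw
    obtain ⟨ε, h1, h2⟩ := (this.and self_mem_nhdsWithin).exists
    exact ⟨ε, h2, h1⟩
  obtain ⟨ε, hε0, hε⟩ := hε
  set P := convexHull ℝ (V : Set (Fin d → ℝ)) with hPdef
  have hVP : ∀ w ∈ V, w ∈ P := fun w hw => subset_convexHull ℝ _ hw
  have key : ∀ w ∈ V, l w + ε * m w ≤ c + ε * b ∧ (l w + ε * m w = c + ε * b ↔ w ∈ G) := by
    intro w hw
    rcases lt_or_eq_of_le (hl w (hVP w hw)) with h | h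
    · have := hε w hw h
      refine ⟨this.le, fun h' => absurd h' this.ne, fun h' => ?_⟩
      have := hG.sub h'
      rw [hFe] at this
      exact absurd this.2 h.ne
    · have hwF : w ∈ F := by rw [hFe]; exact ⟨hVP w hw, h⟩
      have hb := hm w hwF
      refine ⟨?_, ?_, ?_⟩
      · have := mul_le_mul_of_nonneg_left hb hε0.le
        linarith
      · intro h'
        rw [hGe]
        refine ⟨hwF, ?_⟩
        have : ε * m w = ε * b := by linarith
        exact mul_left_cancel₀ hε0.ne' this
      · intro h'
        rw [hGe] at h'
        rw [h, h'.2]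
  set k : (Fin d → ℝ) →L[ℝ] ℝ := l + ε • m with hk
  have hkapp : ∀ x, k x = l x + ε * m x := fun x => by simp [hk]
  have hgF : g ∈ F := hG.sub hg
  have hgl : l g = c := by rw [hFe] at hgF; exact hgF.2
  have hgm : m g = b := by rw [hGe] at hg; exact hg.2
  have hH : IsFaceOf {x | x ∈ P ∧ k x = c + ε * b} P := by
    refine isFaceOf_iff.2 ⟨⟨g, hF.sub hgF, by rw [hkapp, hgl, hgm]⟩, k, c + ε * b, ?_, rfl⟩
    exact le_on_hull fun w hw => by rw [hkapp]; exact (key w hw).1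
  have hGH : G = {x | x ∈ P ∧ k x = c + ε * b} := by
    have hF' := hF.eq_hull
    have e1 : G = convexHull ℝ ((V : Set (Fin d → ℝ)) ∩ G) := by
      have h0 : IsFaceOf G (convexHull ℝ
          (((V.finite_toSet.inter_of_left F).toFinset : Finset (Fin d → ℝ)) :
            Set (Fin d → ℝ))) := by
        rw [Set.Finite.coe_toFinset, ← hF']
        exact hG
      have h1 := h0.eq_hull
      rw [Set.Finite.coe_toFinset] at h1
      rw [Set.inter_assoc, Set.inter_eq_self_of_subset_right hG.sub] at h1
      exact h1
    rw [e1, hH.eq_hull]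
    congr 1
    ext w
    simp only [Set.mem_inter_iff, Finset.mem_coe, Set.mem_ofPred_eq]
    constructor
    · rintro ⟨h1, h2⟩
      exact ⟨h1, hVP w h1, by rw [hkapp]; exact (key w h1).2.2 h2⟩
    · rintro ⟨h1, h2, h3⟩
      exact ⟨h1, (key w h1).2.1 (by rw [← hkapp]; exact h3)⟩
  rw [hGH]
  exact hH

lemma polyDim_lt {G P : Set (Fin d → ℝ)} (hG : IsFaceOf G P) (hne : G ≠ P) :
    polyDim G < polyDim P := by
  obtain ⟨⟨g, hg⟩, l, c, hl, hGe⟩ := isFaceOf_iff.1 hG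
  unfold polyDim
  apply Submodule.finrank_lt_finrank_of_lt
  apply AffineSubspace.direction_lt_of_nonempty
  · refine lt_of_le_of_ne (affineSpan_mono ℝ hG.sub) fun h => hne ?_
    refine Set.Subset.antisymm hG.sub fun x hx => ?_
    have h1 : x ∈ affineSpan ℝ G := by
      rw [h]; exact subset_affineSpan ℝ P hx
    have h2 : x - g ∈ vectorSpan ℝ G := by
      rw [← direction_affineSpan]
      exact AffineSubspace.vsub_mem_direction h1 (subset_affineSpan ℝ G hg)
    have h3 : vectorSpan ℝ G ≤ LinearMap.ker (l : (Fin d → ℝ) →ₗ[ℝ] ℝ) := by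
      rw [vectorSpan_def, Submodule.span_le]
      rintro _ ⟨y, hy, z, hz, rfl⟩
      rw [hGe] at hy hz
      simp [hy.2, hz.2]
    have h4 := h3 h2
    rw [hGe] at hg ⊢
    refine ⟨hx, ?_⟩
    have h5 : l (x - g) = 0 := h4
    rw [map_sub] at h5
    linarith [hg.2]
  · exact ⟨g, subset_affineSpan ℝ G hg⟩

/-- Rotation lemma: a face of codimension at least two is the intersection of two strictly
larger proper faces. -/
lemma exists_larger_faces {G P : Set (Fin d → ℝ)} (hP : IsPolytope P) (hG : IsFaceOf G P)
    (hdim : polyDim G + 1 < polyDim P) :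
    ∃ H₁ H₂, IsFaceOf H₁ P ∧ IsFaceOf H₂ P ∧ H₁ ≠ P ∧ H₂ ≠ P ∧ G ⊆ H₁ ∧ G ⊆ H₂ ∧
      G ≠ H₁ ∧ G ≠ H₂ ∧ H₁ ∩ H₂ ⊆ G := by
  classical
  obtain ⟨V, rfl⟩ := hP
  set P := convexHull ℝ (V : Set (Fin d → ℝ)) with hPdef
  have hVP : ∀ w ∈ V, w ∈ P := fun w hw => subset_convexHull ℝ _ hw
  obtain ⟨⟨g, hg⟩, l, c, hl, hGe⟩ := isFaceOf_iff.1 hG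
  have hgc : l g = c := by rw [hGe] at hg; exact hg.2
  -- a direction in the kernel of `l`
  obtain ⟨u, huP, hul, huG⟩ : ∃ u ∈ vectorSpan ℝ P, l u = 0 ∧ u ∉ vectorSpan ℝ G := by
    by_contra hcon
    push Not at hcon
    let f : vectorSpan ℝ P →ₗ[ℝ] ℝ := (l : (Fin d → ℝ) →ₗ[ℝ] ℝ).domRestrict (vectorSpan ℝ P)
    have h1 := f.finrank_range_add_finrank_ker
    have h2 : Module.finrank ℝ (LinearMap.range f) ≤ 1 := by
      simpa using Submodule.finrank_le (LinearMap.range f)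
    have h3 : (LinearMap.ker f).map (vectorSpan ℝ P).subtype ≤ vectorSpan ℝ G := by
      rintro _ ⟨⟨x, hx⟩, hx', rfl⟩
      exact hcon x hx hx'
    have h4 := Submodule.finrank_mono h3
    rw [Submodule.finrank_map_subtype_eq] at h4
    unfold polyDim at hdim
    rw [direction_affineSpan, direction_affineSpan] at hdim
    omega
  obtain ⟨m₀, hm0, hmG⟩ := Submodule.exists_dual_map_eq_bot_of_notMem huG inferInstance
  have hmG' : ∀ x ∈ G, m₀ x = m₀ g := by
    intro x hx
    have h1 : m₀ (x - g) ∈ Submodule.map m₀ (vectorSpan ℝ G) :=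
      Submodule.mem_map_of_mem (vsub_mem_vectorSpan ℝ hx hg)
    rw [hmG, Submodule.mem_bot, map_sub] at h1
    linarith
  let m : (Fin d → ℝ) →L[ℝ] ℝ := LinearMap.toContinuousLinearMap m₀
  have hmm : ∀ x, m x = m₀ x := fun x => rfl
  have hmu : m u ≠ 0 := hm0
  have hmG : ∀ x ∈ G, m x = m g := hmG'
  have hlt : ∀ w ∈ P, w ∉ G → l w < c := by
    intro w hw hwG
    refine lt_of_le_of_ne (hl w hw) fun h => hwG ?_
    rw [hGe]; exact ⟨hw, h⟩
  let W := V.filter (fun w => w ∉ G)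
  let ρ : (Fin d → ℝ) → ℝ := fun w => (m w - m g) / (c - l w)
  have hWne : W.Nonempty := by
    rw [Finset.nonempty_iff_ne_empty]
    intro hW
    have : G = P := by
      refine face_ext hG (isFaceOf_self ⟨g, hG.sub hg⟩) fun w hw => ?_
      refine ⟨fun _ => hVP w hw, fun _ => ?_⟩
      by_contra h
      have : w ∈ W := Finset.mem_filter.2 ⟨hw, h⟩
      rw [hW] at this
      simp at this
    rw [this] at hdim
    omega
  obtain ⟨w₁, hw₁, hmin⟩ := W.exists_min_image ρ hWne
  obtain ⟨w₂, hw₂, hmax⟩ := W.exists_max_image ρ hWne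
  set r₁ := ρ w₁ with hr₁
  set r₂ := ρ w₂ with hr₂
  have hρ : ∀ w ∈ W, m w - m g = ρ w * (c - l w) := by
    intro w hw
    have hw' := Finset.mem_filter.1 hw
    have : c - l w ≠ 0 := (sub_pos.2 (hlt w (hVP w hw'.1) hw'.2)).ne'
    simp only [ρ]
    field_simp
  have hpos : ∀ w ∈ W, 0 < c - l w := by
    intro w hw
    have hw' := Finset.mem_filter.1 hw
    linarith [hlt w (hVP w hw'.1) hw'.2]
  have hGl : ∀ w ∈ G, l w = c := fun w hw => by rw [hGe] at hw; exact hw.2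
  have hr : r₁ < r₂ := by
    refine lt_of_le_of_ne (hmin w₂ hw₂) fun h => hmu ?_
    have h1 : ∀ w ∈ V, (m + r₁ • l) w = m g + r₁ * c := by
      intro w hw
      have : (m + r₁ • l) w = m w + r₁ * l w := by simp
      rw [this]
      by_cases hwG : w ∈ G
      · rw [hmG w hwG, hGl w hwG]
      · have hwW : w ∈ W := Finset.mem_filter.2 ⟨hw, hwG⟩
        have e1 := hρ w hwW
        have e2 : ρ w = r₁ := le_antisymm (by rw [h]; exact hmax w hwW) (hmin w hwW)
        rw [e2] at e1
        linarith
    have h2 : vectorSpan ℝ P ≤ LinearMap.ker ((m + r₁ • l : (Fin d → ℝ) →L[ℝ] ℝ) :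
        (Fin d → ℝ) →ₗ[ℝ] ℝ) := by
      rw [hPdef, ← direction_affineSpan, affineSpan_convexHull, direction_affineSpan,
        vectorSpan_def, Submodule.span_le]
      rintro _ ⟨y, hy, z, hz, rfl⟩
      have := h1 y hy
      have := h1 z hz
      simp only [SetLike.mem_coe, LinearMap.mem_ker, ContinuousLinearMap.coe_coe, vsub_eq_sub,
        map_sub]
      linarith
    have h3 : (m + r₁ • l) u = 0 := h2 huP
    have : (m + r₁ • l) u = m u + r₁ * l u := by simp
    rw [this, hul] at h3
    linarith
  have hk₁ : ∀ x, (-(m + r₁ • l)) x = - m x - r₁ * l x := by intro x; simp; ring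
  have hk₂ : ∀ x, (m + r₂ • l) x = m x + r₂ * l x := by intro x; simp
  have hb₁ : ∀ w ∈ V, - m w - r₁ * l w ≤ - m g - r₁ * c := by
    intro w hw
    by_cases hwG : w ∈ G
    · rw [hmG w hwG, hGl w hwG]
    · have hwW : w ∈ W := Finset.mem_filter.2 ⟨hw, hwG⟩
      have e1 := hρ w hwW
      have e2 := mul_le_mul_of_nonneg_right (hmin w hwW) (hpos w hwW).le
      linarith
  have hb₂ : ∀ w ∈ V, m w + r₂ * l w ≤ m g + r₂ * c := by
    intro w hw
    by_cases hwG : w ∈ G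
    · rw [hmG w hwG, hGl w hwG]
    · have hwW : w ∈ W := Finset.mem_filter.2 ⟨hw, hwG⟩
      have e1 := hρ w hwW
      have e2 := mul_le_mul_of_nonneg_right (hmax w hwW) (hpos w hwW).le
      linarith
  have hw₁' := Finset.mem_filter.1 hw₁
  have hw₂' := Finset.mem_filter.1 hw₂
  have hgP := hG.sub hg
  have e₁ := hρ w₁ hw₁
  have e₂ := hρ w₂ hw₂
  have p₁ := hpos w₁ hw₁
  have p₂ := hpos w₂ hw₂
  rw [← hr₁] at e₁
  rw [← hr₂] at e₂
  refine ⟨{x | x ∈ P ∧ (-(m + r₁ • l)) x = - m g - r₁ * c},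
    {x | x ∈ P ∧ (m + r₂ • l) x = m g + r₂ * c}, ?_, ?_, ?_, ?_, ?_, ?_, ?_, ?_, ?_⟩
  · exact isFaceOf_iff.2 ⟨⟨g, hgP, by rw [hk₁, hgc]⟩, _, _,
      le_on_hull fun w hw => by rw [hk₁]; exact hb₁ w hw, rfl⟩
  · exact isFaceOf_iff.2 ⟨⟨g, hgP, by rw [hk₂, hgc]⟩, _, _,
      le_on_hull fun w hw => by rw [hk₂]; exact hb₂ w hw, rfl⟩
  · intro h
    have := hVP w₂ hw₂'.1
    rw [← h] at this
    have h2 := this.2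
    rw [hk₁] at h2
    nlinarith
  · intro h
    have := hVP w₁ hw₁'.1
    rw [← h] at this
    have h2 := this.2
    rw [hk₂] at h2
    nlinarith
  · intro x hx
    exact ⟨hG.sub hx, by rw [hk₁, hmG x hx, hGl x hx]⟩
  · intro x hx
    exact ⟨hG.sub hx, by rw [hk₂, hmG x hx, hGl x hx]⟩
  · intro h
    apply hw₁'.2
    rw [h]
    refine ⟨hVP w₁ hw₁'.1, ?_⟩
    rw [hk₁]; linarith
  · intro h
    apply hw₂'.2
    rw [h]
    refine ⟨hVP w₂ hw₂'.1, ?_⟩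
    rw [hk₂]; linarith
  · rintro x ⟨⟨hx, h1⟩, -, h2⟩
    rw [hk₁] at h1
    rw [hk₂] at h2
    rw [hGe]
    refine ⟨hx, ?_⟩
    have : (r₂ - r₁) * (l x - c) = 0 := by linarith
    rcases mul_eq_zero.1 this with h | h
    · linarith
    · linarith

/-- Every proper face is the intersection of the facets containing it. -/
lemma mem_of_mem_facets {P : Set (Fin d → ℝ)} (hP : IsPolytope P) :
    ∀ (k : ℕ) (G : Set (Fin d → ℝ)), polyDim P - polyDim G ≤ k → IsFaceOf G P → G ≠ P →
      ∀ x, (∀ F, IsFacetOf F P → G ⊆ F → x ∈ F) → x ∈ G := by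
  intro k
  induction k with
  | zero =>
    intro G hk hG hne
    have := polyDim_lt hG hne
    omega
  | succ k ih =>
    intro G hk hG hne x hx
    have hlt := polyDim_lt hG hne
    by_cases hd : polyDim G + 1 = polyDim P
    · exact hx G ⟨hG, hd⟩ subset_rfl
    · obtain ⟨H₁, H₂, f₁, f₂, n₁, n₂, s₁, s₂, g₁, g₂, hi⟩ :=
        exists_larger_faces hP hG (by omega)
      have d₁ := polyDim_lt (hG.of_sub f₁ s₁) g₁
      have d₂ := polyDim_lt (hG.of_sub f₂ s₂) g₂
      exact hi ⟨ih H₁ (by omega) f₁ n₁ x fun F hF hs => hx F hF (s₁.trans hs),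
        ih H₂ (by omega) f₂ n₂ x fun F hF hs => hx F hF (s₂.trans hs)⟩

lemma exists_facet_notMem {G P : Set (Fin d → ℝ)} (hP : IsPolytope P) (hG : IsFaceOf G P)
    (hne : G ≠ P) {x : Fin d → ℝ} (hx : x ∉ G) : ∃ F, IsFacetOf F P ∧ G ⊆ F ∧ x ∉ F := by
  by_contra h
  push Not at h
  exact hx (mem_of_mem_facets hP _ G le_rfl hG hne x h)

lemma exists_facet_ge {G P : Set (Fin d → ℝ)} (hP : IsPolytope P) (hG : IsFaceOf G P)
    (hne : G ≠ P) : ∃ F, IsFacetOf F P ∧ G ⊆ F := by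
  obtain ⟨x, hx, hxG⟩ := Set.exists_of_ssubset (hG.sub.ssubset_of_ne hne)
  obtain ⟨F, hF, h, -⟩ := exists_facet_notMem hP hG hne hxG
  exact ⟨F, hF, h⟩

lemma IsFacetOf.ne {F P : Set (Fin d → ℝ)} (hF : IsFacetOf F P) : F ≠ P := by
  rintro rfl
  have := hF.2
  omega

lemma IsFacetOf.eq_of_sub {F H P : Set (Fin d → ℝ)} (hF : IsFacetOf F P) (hH : IsFaceOf H P)
    (hne : H ≠ P) (h : F ⊆ H) : F = H := by
  by_contra hFH
  have h1 := polyDim_lt (hF.1.of_sub hH h) hFH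
  have h2 := polyDim_lt hH hne
  have := hF.2
  omega

/-- A facet of a facet is the intersection with another facet. -/
lemma facet_of_facet {P F C : Set (Fin d → ℝ)} (hP : IsPolytope P) (hF : IsFacetOf F P)
    (hC : IsFacetOf C F) : ∃ G, IsFacetOf G P ∧ G ≠ F ∧ C = F ∩ G := by
  have hCP : IsFaceOf C P := hC.1.trans hP hF.1
  obtain ⟨x, hx, hxC⟩ := Set.exists_of_ssubset (hC.1.sub.ssubset_of_ne hC.ne)
  have hCne : C ≠ P := by
    rintro rfl
    exact hxC (hF.1.sub hx)
  obtain ⟨G, hG, hCG, hxG⟩ := exists_facet_notMem hP hCP hCne hxC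
  have hsub : C ⊆ F ∩ G := Set.subset_inter hC.1.sub hCG
  refine ⟨G, hG, ?_, ?_⟩
  · rintro rfl
    exact hxG hx
  · refine hC.eq_of_sub ?_ ?_ hsub
    · exact (hF.1.inter hG.1 (hC.1.1.mono hsub)).of_sub hF.1 Set.inter_subset_left
    · intro h
      rw [← h] at hx
      exact hxG hx.2

lemma polyDim_singleton (v : Fin d → ℝ) : polyDim ({v} : Set (Fin d → ℝ)) = 0 := by
  unfold polyDim
  rw [direction_affineSpan, vectorSpan_singleton]
  simp

lemma exists_pair_of_dim {P : Set (Fin d → ℝ)} (h : 1 ≤ polyDim P) :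
    ∃ x ∈ P, ∃ y ∈ P, x ≠ y := by
  by_contra hcon
  push Not at hcon
  have hs : P.Subsingleton := fun x hx y hy => hcon x hx y hy
  unfold polyDim at h
  rw [direction_affineSpan, vectorSpan_of_subsingleton ℝ hs] at h
  simp at h

/-- A compact set with two points has a proper face. -/
lemma exists_proper_face {P : Set (Fin d → ℝ)} (hP : IsCompact P) {x y : Fin d → ℝ}
    (hx : x ∈ P) (hy : y ∈ P) (hxy : x ≠ y) : ∃ G, IsFaceOf G P ∧ G ≠ P := by
  obtain ⟨i, hi⟩ : ∃ i, x i ≠ y i := by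
    by_contra h
    push Not at h
    exact hxy (funext h)
  let l : (Fin d → ℝ) →L[ℝ] ℝ := ContinuousLinearMap.proj i
  obtain ⟨z, hz, hmax⟩ := hP.exists_isMaxOn ⟨x, hx⟩ l.continuous.continuousOn
  refine ⟨{p | p ∈ P ∧ l p = l z}, isFaceOf_iff.2 ⟨⟨z, hz, rfl⟩, l, l z, hmax, rfl⟩, ?_⟩
  intro h
  have h1 := hx
  have h2 := hy
  rw [← h] at h1 h2
  exact hi (h1.2.trans h2.2.symm)

lemma exists_vertex {P : Set (Fin d → ℝ)} (hP : IsPolytope P) :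
    ∀ (k : ℕ) (H : Set (Fin d → ℝ)), polyDim H ≤ k → IsFaceOf H P →
      ∃ v ∈ H, IsFaceOf {v} P := by
  intro k
  induction k using Nat.strong_induction_on with
  | _ k ih =>
    intro H hk hH
    obtain ⟨v, hv⟩ := hH.1
    by_cases hs : ∃ w ∈ H, w ≠ v
    · obtain ⟨w, hw, hwv⟩ := hs
      obtain ⟨G, hG, hne⟩ := exists_proper_face (hH.isPolytope hP).isCompact hw hv hwv
      have hlt := polyDim_lt hG hne
      obtain ⟨u, hu, huP⟩ := ih (polyDim G) (by omega) G le_rfl (hG.trans hP hH)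
      exact ⟨u, hG.sub hu, huP⟩
    · push Not at hs
      have : H = {v} := by
        ext w
        exact ⟨fun hw => hs w hw, fun hw => by rw [Set.mem_singleton_iff.1 hw]; exact hv⟩
      exact ⟨v, hv, this ▸ hH⟩

/-- The facets of `P` through `v`. -/
def facetsAt (P : Set (Fin d → ℝ)) (v : Fin d → ℝ) : Set (Set (Fin d → ℝ)) :=
  {F | IsFacetOf F P ∧ v ∈ F}

lemma finite_facetsAt {P : Set (Fin d → ℝ)} (hP : IsPolytope P) (v : Fin d → ℝ) :
    (facetsAt P v).Finite :=
  (finite_faces hP).subset fun _ h => h.1.1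

lemma exists_lift {P F : Set (Fin d → ℝ)} (hP : IsPolytope P) (hF : IsFacetOf F P)
    {v : Fin d → ℝ} : ∃ g : Set (Fin d → ℝ) → Set (Fin d → ℝ),
      (∀ C ∈ facetsAt F v, C = F ∩ g C) ∧ Set.InjOn g (facetsAt F v) ∧
      g '' facetsAt F v ⊆ facetsAt P v \ {F} := by
  classical
  have : ∀ C, ∃ G, IsFacetOf C F → IsFacetOf G P ∧ G ≠ F ∧ C = F ∩ G := by
    intro C
    by_cases hC : IsFacetOf C F
    · obtain ⟨G, hG⟩ := facet_of_facet hP hF hC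
      exact ⟨G, fun _ => hG⟩
    · exact ⟨∅, fun h => absurd h hC⟩
  choose g hg using this
  refine ⟨g, fun C hC => (hg C hC.1).2.2, ?_, ?_⟩
  · intro C hC C' hC' h
    rw [(hg C hC.1).2.2, (hg C' hC'.1).2.2, h]
  · rintro _ ⟨C, hC, rfl⟩
    have h := hg C hC.1
    refine ⟨⟨h.1, ?_⟩, h.2.1⟩
    have hv := hC.2
    rw [h.2.2] at hv
    exact hv.2

lemma polyDim_le_ncard : ∀ (k : ℕ) (P : Set (Fin d → ℝ)) (v : Fin d → ℝ), polyDim P = k →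
    IsPolytope P → IsFaceOf {v} P → k ≤ (facetsAt P v).ncard := by
  intro k
  induction k with
  | zero => intros; exact Nat.zero_le _
  | succ k ih =>
    intro P v hk hP hv
    have hne : {v} ≠ P := by
      rintro rfl
      rw [polyDim_singleton] at hk
      omega
    obtain ⟨F, hF, hvF⟩ := exists_facet_ge hP hv hne
    have hvF' : v ∈ F := hvF rfl
    obtain ⟨g, -, hinj, hsub⟩ := exists_lift hP hF (v := v)
    have h1 := ih F v (by have := hF.2; omega) (hF.1.isPolytope hP) (hv.of_sub hF.1 hvF)
    have h2 := Set.ncard_le_ncard hsub ((finite_facetsAt hP v).sdiff)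
    rw [hinj.ncard_image] at h2
    have h3 := Set.ncard_sdiff_singleton_add_one (show F ∈ facetsAt P v from ⟨hF, hvF'⟩)
      (finite_facetsAt hP v)
    omega

/-- In a simple polytope, two intersecting facets meet in a facet of each. -/
lemma inter_facet {P F G : Set (Fin d → ℝ)} (hP : IsSimplePolytope P) (hF : IsFacetOf F P)
    (hG : IsFacetOf G P) (hne : G ≠ F) (h : (F ∩ G).Nonempty) : IsFacetOf (F ∩ G) F := by
  obtain ⟨v, hv, hvP⟩ := exists_vertex hP.1 _ (F ∩ G) le_rfl (hF.1.inter hG.1 h)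
  obtain ⟨g, hg, hinj, hsub⟩ := exists_lift hP.1 hF (v := v)
  have hcard : (facetsAt P v).ncard = polyDim P := hP.2 v hvP
  have h1 := polyDim_le_ncard _ F v rfl (hF.1.isPolytope hP.1)
    (hvP.of_sub hF.1 (Set.singleton_subset_iff.2 hv.1))
  have h3 := Set.ncard_sdiff_singleton_add_one (show F ∈ facetsAt P v from ⟨hF, hv.1⟩)
    (finite_facetsAt hP.1 v)
  have h4 := hF.2
  have h5 := Set.eq_of_subset_of_ncard_le hsub
    (by rw [hinj.ncard_image]; omega) ((finite_facetsAt hP.1 v).sdiff)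
  have h6 : G ∈ g '' facetsAt F v := by
    rw [h5]
    exact ⟨⟨hG, hv.2⟩, hne⟩
  obtain ⟨C, hC, rfl⟩ := h6
  rw [← hg C hC]
  exact hC.1

end Polytopes
/-! ### Products -/

section Products

variable {d₁ d₂ : ℕ}

/-- First projection. -/
noncomputable def pr₁ (d₁ d₂ : ℕ) : (Fin (d₁ + d₂) → ℝ) →ₗ[ℝ] (Fin d₁ → ℝ) :=
  LinearMap.funLeft ℝ ℝ (Fin.castAdd d₂)

/-- Second projection. -/
noncomputable def pr₂ (d₁ d₂ : ℕ) : (Fin (d₁ + d₂) → ℝ) →ₗ[ℝ] (Fin d₂ → ℝ) :=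
  LinearMap.funLeft ℝ ℝ (Fin.natAdd d₁)

lemma mem_polyProd {Q : Set (Fin d₁ → ℝ)} {R : Set (Fin d₂ → ℝ)} {x : Fin (d₁ + d₂) → ℝ} :
    x ∈ polyProd Q R ↔ pr₁ d₁ d₂ x ∈ Q ∧ pr₂ d₁ d₂ x ∈ R := Iff.rfl

@[simp] lemma pr₁_append (q : Fin d₁ → ℝ) (r : Fin d₂ → ℝ) : pr₁ d₁ d₂ (Fin.append q r) = q := by
  ext i; simp [pr₁, LinearMap.funLeft]

@[simp] lemma pr₂_append (q : Fin d₁ → ℝ) (r : Fin d₂ → ℝ) : pr₂ d₁ d₂ (Fin.append q r) = r := by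
  ext i; simp [pr₂, LinearMap.funLeft]

/-- Inclusion of the first factor. -/
noncomputable def inj₁ (d₁ d₂ : ℕ) : (Fin d₁ → ℝ) →ₗ[ℝ] (Fin (d₁ + d₂) → ℝ) where
  toFun q := Fin.append q 0
  map_add' p q := by
    ext i
    refine Fin.addCases (fun j => ?_) (fun j => ?_) i <;> simp
  map_smul' c q := by
    ext i
    refine Fin.addCases (fun j => ?_) (fun j => ?_) i <;> simp

/-- Inclusion of the second factor. -/
noncomputable def inj₂ (d₁ d₂ : ℕ) : (Fin d₂ → ℝ) →ₗ[ℝ] (Fin (d₁ + d₂) → ℝ) where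
  toFun r := Fin.append 0 r
  map_add' p q := by
    ext i
    refine Fin.addCases (fun j => ?_) (fun j => ?_) i <;> simp
  map_smul' c q := by
    ext i
    refine Fin.addCases (fun j => ?_) (fun j => ?_) i <;> simp

lemma eq_inj_add (x : Fin (d₁ + d₂) → ℝ) :
    x = inj₁ d₁ d₂ (pr₁ d₁ d₂ x) + inj₂ d₁ d₂ (pr₂ d₁ d₂ x) := by
  ext i
  refine Fin.addCases (fun j => ?_) (fun j => ?_) i <;>
    simp [inj₁, inj₂, pr₁, pr₂, LinearMap.funLeft]

lemma append_mem {Q : Set (Fin d₁ → ℝ)} {R : Set (Fin d₂ → ℝ)} {q : Fin d₁ → ℝ} {r : Fin d₂ → ℝ} :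
    Fin.append q r ∈ polyProd Q R ↔ q ∈ Q ∧ r ∈ R := by
  rw [mem_polyProd, pr₁_append, pr₂_append]

lemma face_prod {Q A : Set (Fin d₁ → ℝ)} {R B : Set (Fin d₂ → ℝ)} (hA : IsFaceOf A Q)
    (hB : IsFaceOf B R) : IsFaceOf (polyProd A B) (polyProd Q R) := by
  obtain ⟨⟨a, ha⟩, l, c, hl, hAe⟩ := isFaceOf_iff.1 hA
  obtain ⟨⟨b, hb⟩, m, c', hm, hBe⟩ := isFaceOf_iff.1 hB
  refine isFaceOf_iff.2 ⟨⟨Fin.append a b, append_mem.2 ⟨ha, hb⟩⟩,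
    LinearMap.toContinuousLinearMap ((l : (Fin d₁ → ℝ) →ₗ[ℝ] ℝ) ∘ₗ pr₁ d₁ d₂ +
      (m : (Fin d₂ → ℝ) →ₗ[ℝ] ℝ) ∘ₗ pr₂ d₁ d₂), c + c', ?_, ?_⟩
  · intro y hy
    exact add_le_add (hl _ hy.1) (hm _ hy.2)
  · ext x
    constructor
    · intro hx
      have h1 : pr₁ d₁ d₂ x ∈ A := hx.1
      have h2 : pr₂ d₁ d₂ x ∈ B := hx.2
      rw [hAe] at h1
      rw [hBe] at h2
      refine ⟨⟨h1.1, h2.1⟩, ?_⟩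
      change l (pr₁ d₁ d₂ x) + m (pr₂ d₁ d₂ x) = c + c'
      rw [h1.2, h2.2]
    · rintro ⟨hx, hx'⟩
      have h0 : l (pr₁ d₁ d₂ x) + m (pr₂ d₁ d₂ x) = c + c' := hx'
      rw [mem_polyProd] at hx ⊢
      have h1 := hl _ hx.1
      have h2 := hm _ hx.2
      rw [hAe, hBe]
      exact ⟨⟨hx.1, by linarith⟩, ⟨hx.2, by linarith⟩⟩

lemma exists_prod_of_face {Q : Set (Fin d₁ → ℝ)} {R : Set (Fin d₂ → ℝ)}
    {H : Set (Fin (d₁ + d₂) → ℝ)} (hH : IsFaceOf H (polyProd Q R)) :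
    ∃ A B, IsFaceOf A Q ∧ IsFaceOf B R ∧ H = polyProd A B := by
  obtain ⟨⟨h, hh⟩, l, c, hl, hHe⟩ := isFaceOf_iff.1 hH
  let l₁ : (Fin d₁ → ℝ) →L[ℝ] ℝ :=
    LinearMap.toContinuousLinearMap ((l : (Fin (d₁ + d₂) → ℝ) →ₗ[ℝ] ℝ) ∘ₗ inj₁ d₁ d₂)
  let l₂ : (Fin d₂ → ℝ) →L[ℝ] ℝ :=
    LinearMap.toContinuousLinearMap ((l : (Fin (d₁ + d₂) → ℝ) →ₗ[ℝ] ℝ) ∘ₗ inj₂ d₁ d₂)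
  have hsum : ∀ x, l x = l₁ (pr₁ d₁ d₂ x) + l₂ (pr₂ d₁ d₂ x) := by
    intro x
    conv_lhs => rw [eq_inj_add x]
    rw [map_add]
    rfl
  rw [hHe] at hh
  obtain ⟨hhP, hhc⟩ := hh
  rw [mem_polyProd] at hhP
  set a := pr₁ d₁ d₂ h
  set b := pr₂ d₁ d₂ h
  have hab : l₁ a + l₂ b = c := by rw [← hhc, hsum]
  have hb₁ : ∀ q ∈ Q, l₁ q ≤ l₁ a := by
    intro q hq
    have := hl (Fin.append q b) (append_mem.2 ⟨hq, hhP.2⟩)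
    rw [hsum, pr₁_append, pr₂_append] at this
    linarith
  have hb₂ : ∀ r ∈ R, l₂ r ≤ l₂ b := by
    intro r hr
    have := hl (Fin.append a r) (append_mem.2 ⟨hhP.1, hr⟩)
    rw [hsum, pr₁_append, pr₂_append] at this
    linarith
  refine ⟨{q | q ∈ Q ∧ l₁ q = l₁ a}, {r | r ∈ R ∧ l₂ r = l₂ b},
    isFaceOf_iff.2 ⟨⟨a, hhP.1, rfl⟩, _, _, hb₁, rfl⟩,
    isFaceOf_iff.2 ⟨⟨b, hhP.2, rfl⟩, _, _, hb₂, rfl⟩, ?_⟩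
  rw [hHe]
  ext x
  constructor
  · rintro ⟨hx, hx'⟩
    rw [mem_polyProd] at hx
    rw [hsum] at hx'
    have h1 := hb₁ _ hx.1
    have h2 := hb₂ _ hx.2
    exact mem_polyProd.2 ⟨⟨hx.1, by linarith⟩, ⟨hx.2, by linarith⟩⟩
  · intro hx
    obtain ⟨⟨h1, h2⟩, ⟨h3, h4⟩⟩ := mem_polyProd.1 hx
    refine ⟨mem_polyProd.2 ⟨h1, h3⟩, ?_⟩
    rw [hsum, h2, h4, hab]

lemma polyProd_sub {A A' : Set (Fin d₁ → ℝ)} {B B' : Set (Fin d₂ → ℝ)} (hA : A.Nonempty)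
    (hB : B.Nonempty) (h : polyProd A B ⊆ polyProd A' B') : A ⊆ A' ∧ B ⊆ B' := by
  obtain ⟨a, ha⟩ := hA
  obtain ⟨b, hb⟩ := hB
  exact ⟨fun x hx => (append_mem.1 (h (append_mem.2 ⟨hx, hb⟩))).1,
    fun x hx => (append_mem.1 (h (append_mem.2 ⟨ha, hx⟩))).2⟩

lemma polyProd_mono {A A' : Set (Fin d₁ → ℝ)} {B B' : Set (Fin d₂ → ℝ)}
    (hA : A ⊆ A') (hB : B ⊆ B') : polyProd A B ⊆ polyProd A' B' :=
  fun _ hx => ⟨hA hx.1, hB hx.2⟩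

/-- The facets of a decomposable polytope split into two nonempty classes such that any two
facets of different classes intersect. -/
lemma exists_split {d : ℕ} {P : Set (Fin d → ℝ)} (hP : IsPolytope P) (h : ¬ Indecomposable P) :
    ∃ T : Set (Fin d → ℝ) → Prop, (∃ F, IsFacetOf F P ∧ T F) ∧ (∃ F, IsFacetOf F P ∧ ¬ T F) ∧
      ∀ F G, IsFacetOf F P → IsFacetOf G P → T F → ¬ T G → (F ∩ G).Nonempty := by
  unfold Indecomposable at h
  rw [not_not] at h
  obtain ⟨d₁, d₂, Q, R, hQ, hR, hdQ, hdR, ⟨e⟩⟩ := h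
  obtain ⟨q, hq, q', hq', hqq⟩ := exists_pair_of_dim hdQ
  obtain ⟨r, hr, r', hr', hrr⟩ := exists_pair_of_dim hdR
  obtain ⟨A₀, hA₀, hA₀ne⟩ := exists_proper_face hQ.isCompact hq hq' hqq
  obtain ⟨B₀, hB₀, hB₀ne⟩ := exists_proper_face hR.isCompact hr hr' hrr
  have hQQ : IsFaceOf Q Q := isFaceOf_self ⟨q, hq⟩
  have hRR : IsFaceOf R R := isFaceOf_self ⟨r, hr⟩
  have hQR : IsFaceOf (polyProd Q R) (polyProd Q R) := face_prod hQQ hRR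
  have hPP : IsFaceOf P P :=
    isFaceOf_self ((e.symm ⟨_, hQR⟩).2.1.mono (e.symm ⟨_, hQR⟩).2.sub)
  have htop : e ⟨P, hPP⟩ = ⟨_, hQR⟩ := by
    apply le_antisymm
    · exact (e ⟨P, hPP⟩).2.sub
    · rw [← e.symm_apply_le]
      exact (e.symm ⟨_, hQR⟩).2.sub
  -- proper faces of the product lie in a facet
  have hge : ∀ H (hH : IsFaceOf H (polyProd Q R)), H ≠ polyProd Q R →
      ∃ F, ∃ hF : IsFacetOf F P, H ⊆ (e ⟨F, hF.1⟩).1 := by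
    intro H hH hne
    have h1 : (e.symm ⟨H, hH⟩).1 ≠ P := by
      intro h1
      apply hne
      have h2 : e.symm ⟨H, hH⟩ = ⟨P, hPP⟩ := Subtype.ext h1
      rw [OrderIso.symm_apply_eq, htop] at h2
      exact congrArg Subtype.val h2
    obtain ⟨F, hF, hs⟩ := exists_facet_ge hP (e.symm ⟨H, hH⟩).2 h1
    refine ⟨F, hF, ?_⟩
    have h2 : e.symm ⟨H, hH⟩ ≤ ⟨F, hF.1⟩ := hs
    rw [e.symm_apply_le] at h2
    exact h2
  have hnetop : ∀ F (hF : IsFacetOf F P), (e ⟨F, hF.1⟩).1 ≠ polyProd Q R := by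
    intro F hF h1
    have h2 : e ⟨F, hF.1⟩ = e ⟨P, hPP⟩ := by rw [htop]; exact Subtype.ext h1
    exact hF.ne (congrArg Subtype.val (e.injective h2))
  have hmax : ∀ F (hF : IsFacetOf F P) H, IsFaceOf H (polyProd Q R) → H ≠ polyProd Q R →
      (e ⟨F, hF.1⟩).1 ⊆ H → (e ⟨F, hF.1⟩).1 = H := by
    intro F hF H hH hne hs
    obtain ⟨G, hG, hHG⟩ := hge H hH hne
    have h1 : e ⟨F, hF.1⟩ ≤ e ⟨G, hG.1⟩ := hs.trans hHG
    rw [e.le_iff_le] at h1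
    have h2 : F = G := hF.eq_of_sub hG.1 hG.ne h1
    subst h2
    exact Set.Subset.antisymm hs hHG
  refine ⟨fun F => ∃ (hF : IsFaceOf F P) (A : Set (Fin d₁ → ℝ)), IsFaceOf A Q ∧
    (e ⟨F, hF⟩).1 = polyProd A R, ?_, ?_, ?_⟩
  · obtain ⟨F, hF, hs⟩ := hge (polyProd A₀ R) (face_prod hA₀ hRR) (by
      intro h1
      exact hA₀ne (Set.Subset.antisymm hA₀.sub
        (polyProd_sub ⟨q, hq⟩ ⟨r, hr⟩ h1.symm.subset).1))
    obtain ⟨A, B, hA, hB, he⟩ := exists_prod_of_face (e ⟨F, hF.1⟩).2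
    refine ⟨F, hF, hF.1, A, hA, ?_⟩
    rw [he] at hs ⊢
    rw [Set.Subset.antisymm hB.sub (polyProd_sub hA₀.1 ⟨r, hr⟩ hs).2]
  · obtain ⟨F, hF, hs⟩ := hge (polyProd Q B₀) (face_prod hQQ hB₀) (by
      intro h1
      exact hB₀ne (Set.Subset.antisymm hB₀.sub
        (polyProd_sub ⟨q, hq⟩ ⟨r, hr⟩ h1.symm.subset).2))
    refine ⟨F, hF, ?_⟩
    rintro ⟨hF', A, hA, he⟩
    apply hnetop F hF
    rw [he] at hs ⊢
    rw [Set.Subset.antisymm hA.sub (polyProd_sub ⟨q, hq⟩ hB₀.1 hs).1]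
  · rintro F G hF hG ⟨hF', A, hA, he⟩ hnT
    obtain ⟨A', B, hA', hB, he'⟩ := exists_prod_of_face (e ⟨G, hG.1⟩).2
    have hB' : polyProd A' R = polyProd Q R := by
      by_contra hne
      apply hnT
      refine ⟨hG.1, A', hA', ?_⟩
      refine hmax G hG _ (face_prod hA' hRR) hne ?_
      rw [he']
      exact polyProd_mono subset_rfl hB.sub
    have hA'Q : A' = Q := Set.Subset.antisymm hA'.sub
        (polyProd_sub ⟨q, hq⟩ ⟨r, hr⟩ hB'.symm.subset).1
    subst hA'Q
    have hAB := face_prod hA hB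
    have h1 : e.symm ⟨_, hAB⟩ ≤ ⟨F, hF.1⟩ := by
      rw [e.symm_apply_le]
      change polyProd A B ⊆ (e ⟨F, hF.1⟩).1
      rw [he]
      exact polyProd_mono subset_rfl hB.sub
    have h2 : e.symm ⟨_, hAB⟩ ≤ ⟨G, hG.1⟩ := by
      rw [e.symm_apply_le]
      change polyProd A B ⊆ (e ⟨G, hG.1⟩).1
      rw [he']
      exact polyProd_mono hA.sub subset_rfl
    exact (e.symm ⟨_, hAB⟩).2.1.mono (Set.subset_inter h1 h2)

end Products
/-! ### Combinatorics of the type `D_n` model -/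

section Model

variable {n : ℕ}

lemma nn_zero : (n : ZMod (2 * n)) + n = 0 := by
  have h := ZMod.natCast_self (2 * n)
  push_cast at h
  linear_combination h

lemma cast_ne_zero' {k : ℕ} (h0 : 0 < k) (h1 : k < 2 * n) : (k : ZMod (2 * n)) ≠ 0 := by
  intro h
  rw [ZMod.natCast_eq_zero_iff] at h
  exact absurd (Nat.le_of_dvd h0 h) (by omega)

/-- The diameter through `a`. -/
def dm (n : ℕ) (a : ZMod (2 * n)) : Finset (ZMod (2 * n)) := {a, a + (n : ZMod (2 * n))}

lemma pair_eq_iff {α : Type*} [DecidableEq α] {a b c d : α} (h : ({a, b} : Finset α) = {c, d}) :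
    (a = c ∧ b = d) ∨ (a = d ∧ b = c) := by
  have h' : ({a, b} : Set α) = {c, d} := by
    have := congrArg (fun s : Finset α => (s : Set α)) h
    simpa using this
  exact Set.pair_eq_pair_iff.1 h'

lemma dm_add (a : ZMod (2 * n)) : dm n (a + n) = dm n a := by
  unfold dm
  rw [add_assoc, nn_zero, add_zero, Finset.pair_comm]

lemma dm_eq_iff {a b : ZMod (2 * n)} : dm n a = dm n b ↔ a = b ∨ a = b + n := by
  constructor
  · intro h
    rcases pair_eq_iff h with h | h
    · exact Or.inl h.1
    · exact Or.inr h.1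
  · rintro (rfl | rfl)
    · rfl
    · exact dm_add b

lemma dm_isDiag (hn : 4 ≤ n) (a : ZMod (2 * n)) : IsDiag (2 * n) (dm n a) := by
  refine ⟨a, a + n, rfl, ?_, ?_, ?_⟩
  · intro h
    exact cast_ne_zero' (n := n) (k := n) (by omega) (by omega) (by linear_combination h)
  · intro h
    refine cast_ne_zero' (n := n) (k := n - 1) (by omega) (by omega) ?_
    rw [Nat.cast_sub (by omega)]
    push_cast
    linear_combination h
  · intro h
    refine cast_ne_zero' (n := n) (k := n + 1) (by omega) (by omega) ?_
    push_cast
    linear_combination h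

/-- Red diameter. -/
def rD (hn : 4 ≤ n) (a : ZMod (2 * n)) : MSet n := ⟨.red (dm n a), dm_isDiag hn a, a, rfl⟩

/-- Blue diameter. -/
def bD (hn : 4 ≤ n) (a : ZMod (2 * n)) : MSet n := ⟨.blue (dm n a), dm_isDiag hn a, a, rfl⟩

/-- The symmetric pair of diagonals generated by `{c, c + k}`. -/
def pr (n : ℕ) (c : ZMod (2 * n)) (k : ℕ) : Finset (Finset (ZMod (2 * n))) :=
  {{c, c + (k : ZMod (2 * n))}, {c + (n : ZMod (2 * n)), c + (k : ZMod (2 * n)) + n}}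

lemma pr_eq (c : ZMod (2 * n)) (k : ℕ) :
    pr n c k = {{c, c + (k : ZMod (2 * n))}, centralSym n {c, c + (k : ZMod (2 * n))}} := by
  simp [pr, centralSym, Finset.image_insert]

lemma memM_pair {s : Finset (Finset (ZMod (2 * n)))} (hn : 4 ≤ n) (h : memM n (.pair s)) :
    ∃ (c : ZMod (2 * n)) (k : ℕ), 2 ≤ k ∧ k < n ∧ s = pr n c k := by
  have : NeZero (2 * n) := ⟨by omega⟩
  obtain ⟨e, ⟨a, b, rfl, h0, h1, h2⟩, hd, rfl⟩ := h
  set j := (b - a).val with hj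
  have hjlt : j < 2 * n := ZMod.val_lt _
  have hb : b = a + (j : ZMod (2 * n)) := by
    rw [hj, ZMod.natCast_zmod_val]; ring
  have j0 : j ≠ 0 := by
    intro h; rw [h] at hb; exact h0 (by simpa using hb)
  have j1 : j ≠ 1 := by
    intro h; rw [h] at hb; exact h1 (by simpa using hb)
  have jn : j ≠ n := by
    intro h; rw [h] at hb; exact hd ⟨a, by rw [hb]⟩
  have hk : ((2 * n - j : ℕ) : ZMod (2 * n)) = - (j : ZMod (2 * n)) := by
    rw [Nat.cast_sub hjlt.le, ZMod.natCast_self]; ring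
  have j2 : j ≠ 2 * n - 1 := by
    intro h
    have h3 : 2 * n - j = 1 := by omega
    rw [h3] at hk
    push_cast at hk
    exact h2 (by linear_combination hb + hk)
  rcases lt_or_gt_of_ne jn with h | h
  · refine ⟨a, j, by omega, h, ?_⟩
    rw [pr_eq, hb]
  · refine ⟨b, 2 * n - j, by omega, by omega, ?_⟩
    have : b + ((2 * n - j : ℕ) : ZMod (2 * n)) = a := by rw [hk, hb]; ring
    rw [pr_eq, this, Finset.pair_comm b a]

lemma cross_dm {c : ZMod (2 * n)} {i k : ℕ} (h0 : 0 < i) (h1 : i < k) (h2 : k < n) :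
    Crosses (2 * n) (dm n (c + i)) {c, c + (k : ZMod (2 * n))} := by
  refine ⟨c + i + n, c + i, c, c + k, Finset.pair_comm _ _, rfl, ?_, ?_⟩
  · have e1 : c - (c + i + n) = ((n - i : ℕ) : ZMod (2 * n)) := by
      rw [Nat.cast_sub (by omega)]
      linear_combination - nn_zero (n := n)
    have e2 : c + i - (c + i + n) = ((n : ℕ) : ZMod (2 * n)) := by
      linear_combination - nn_zero (n := n)
    unfold StrictBtw
    rw [e1, e2, ZMod.val_natCast_of_lt (by omega), ZMod.val_natCast_of_lt (by omega)]
    omega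
  · have e1 : c + k - (c + i) = ((k - i : ℕ) : ZMod (2 * n)) := by
      rw [Nat.cast_sub (by omega)]
      ring
    have e2 : c + i + n - (c + i) = ((n : ℕ) : ZMod (2 * n)) := by ring
    unfold StrictBtw
    rw [e1, e2, ZMod.val_natCast_of_lt (by omega), ZMod.val_natCast_of_lt (by omega)]
    omega

lemma cross_short_aux (hn : 4 ≤ n) {a' b' c d : ZMod (2 * n)} (hab : b' = a' + n)
    (h1 : StrictBtw (2 * n) a' c b') (h2 : StrictBtw (2 * n) b' d a') :
    (d = c + 2 → b' = c + 1) ∧ (c = d + 2 → a' = d + 1) := by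
  have : NeZero (2 * n) := ⟨by omega⟩
  have e1 : b' - a' = ((n : ℕ) : ZMod (2 * n)) := by rw [hab]; ring
  have e2 : a' - b' = ((n : ℕ) : ZMod (2 * n)) := by
    rw [hab]; linear_combination - nn_zero (n := n)
  unfold StrictBtw at h1 h2
  rw [e1, ZMod.val_natCast_of_lt (by omega)] at h1
  rw [e2, ZMod.val_natCast_of_lt (by omega)] at h2
  set i := (c - a').val with hi
  set j := (d - b').val with hj
  have hc : c = a' + (i : ZMod (2 * n)) := by rw [hi, ZMod.natCast_zmod_val]; ring
  have hd : d = b' + (j : ZMod (2 * n)) := by rw [hj, ZMod.natCast_zmod_val]; ring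
  have inj : ∀ p q : ℕ, p < 2 * n → q < 2 * n → (p : ZMod (2 * n)) = q → p = q := by
    intro p q hp hq h
    have := congrArg ZMod.val h
    rwa [ZMod.val_natCast_of_lt hp, ZMod.val_natCast_of_lt hq] at this
  constructor
  · intro h
    have := inj (n + j - i) 2 (by omega) (by omega) (by
      rw [Nat.cast_sub (by omega)]
      push_cast
      rw [hd, hc, hab] at h
      linear_combination h)
    have hj1 : j = 1 := by omega
    rw [hj1] at hd
    push_cast at hd
    linear_combination h - hd
  · intro h
    have := inj (n + i - j) 2 (by omega) (by omega) (by
      rw [Nat.cast_sub (by omega)]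
      push_cast
      rw [hd, hc, hab] at h
      linear_combination h + nn_zero (n := n))
    have hi1 : i = 1 := by omega
    rw [hi1] at hc
    push_cast at hc
    linear_combination h - hc

lemma cross_short (hn : 4 ≤ n) {a b : ZMod (2 * n)}
    (h : Crosses (2 * n) (dm n b) {a, a + 2}) : dm n b = dm n (a + 1) := by
  obtain ⟨a', b', c, d, h1, h2, h3, h4⟩ := h
  have h5 : b' = a' + n ∧ dm n b = dm n a' := by
    rcases pair_eq_iff h1 with ⟨rfl, rfl⟩ | ⟨rfl, rfl⟩
    · exact ⟨rfl, rfl⟩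
    · exact ⟨by rw [add_assoc, nn_zero, add_zero], (dm_add _).symm⟩
  have h6 := cross_short_aux hn h5.1 h3 h4
  rw [h5.2]
  rcases pair_eq_iff h2 with ⟨e1, e2⟩ | ⟨e1, e2⟩
  · have := h6.1 (by rw [← e1, ← e2])
    rw [← e1] at this
    rw [← this, h5.1, dm_add]
  · have := h6.2 (by rw [← e1, ← e2])
    rw [← e1] at this
    rw [this]

lemma two_ne (hn : 4 ≤ n) : (2 : ZMod (2 * n)) ≠ 0 := by
  have := cast_ne_zero' (n := n) (k := 2) (by omega) (by omega)
  simpa using this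

lemma four_ne (hn : 4 ≤ n) : (4 : ZMod (2 * n)) ≠ 0 := by
  have := cast_ne_zero' (n := n) (k := 4) (by omega) (by omega)
  simpa using this

/-- Diameters at small distance are distinct. -/
lemma dm_ne {a : ZMod (2 * n)} {i j : ℕ} (hij : i < j) (hj : j < i + n) :
    dm n (a + i) ≠ dm n (a + j) := by
  intro h
  rcases dm_eq_iff.1 h with h | h
  · refine cast_ne_zero' (n := n) (k := j - i) (by omega) (by omega) ?_
    rw [Nat.cast_sub hij.le]
    linear_combination - h
  · refine cast_ne_zero' (n := n) (k := j + n - i) (by omega) (by omega) ?_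
    rw [Nat.cast_sub (by omega)]
    push_cast
    linear_combination - h

lemma short_mem (hn : 4 ≤ n) (a : ZMod (2 * n)) : memM n (.pair (pr n a 2)) := by
  have h1 := cast_ne_zero' (n := n) (k := 1) (by omega) (by omega)
  have h2 := cast_ne_zero' (n := n) (k := 2) (by omega) (by omega)
  have h3 := cast_ne_zero' (n := n) (k := 3) (by omega) (by omega)
  push_cast at h1 h2 h3
  refine ⟨_, ⟨a, a + ((2 : ℕ) : ZMod (2 * n)), rfl, ?_, ?_, ?_⟩, ?_, pr_eq a 2⟩
  · intro h; push_cast at h; exact h2 (by linear_combination h)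
  · intro h; push_cast at h; exact h1 (by linear_combination h)
  · intro h; push_cast at h; exact h3 (by linear_combination h)
  · rintro ⟨b, hb⟩
    have h4 : ∀ m : ℕ, (m = n - 2 ∨ m = n + 2) → (m : ZMod (2 * n)) ≠ 0 := fun m hm =>
      cast_ne_zero' (by omega) (by omega)
    have h5 := h4 (n - 2) (Or.inl rfl)
    have h6 := h4 (n + 2) (Or.inr rfl)
    rw [Nat.cast_sub (by omega)] at h5
    push_cast at h5 h6
    rcases pair_eq_iff hb with ⟨e1, e2⟩ | ⟨e1, e2⟩
    · apply h5; push_cast at e2; linear_combination e1 - e2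
    · apply h6; push_cast at e2; linear_combination e2 - e1

/-- The pair of shortest diagonals generated by `{a, a + 2}`. -/
def sD (hn : 4 ≤ n) (a : ZMod (2 * n)) : MSet n := ⟨.pair (pr n a 2), short_mem hn a⟩

lemma cases_MSet (hn : 4 ≤ n) (y : MSet n) : (∃ a, y = rD hn a) ∨ (∃ a, y = bD hn a) ∨
    ∃ (c : ZMod (2 * n)) (k : ℕ), 2 ≤ k ∧ k < n ∧ y.1 = .pair (pr n c k) := by
  obtain ⟨y, hy⟩ := y
  cases y with
  | pair s =>
    obtain ⟨c, k, h1, h2, rfl⟩ := memM_pair hn hy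
    exact Or.inr (Or.inr ⟨c, k, h1, h2, rfl⟩)
  | red e =>
    obtain ⟨a, rfl⟩ := hy.2
    exact Or.inl ⟨a, rfl⟩
  | blue e =>
    obtain ⟨a, rfl⟩ := hy.2
    exact Or.inr (Or.inl ⟨a, rfl⟩)

lemma pair_not_compat (hn : 4 ≤ n) {y : MSet n} {c : ZMod (2 * n)} {i k : ℕ}
    (hy : y.1 = .pair (pr n c k)) (h0 : 0 < i) (h1 : i < k) (h2 : k < n) :
    ¬ DCompat n y.1 (rD hn (c + i)).1 ∧ ¬ DCompat n (rD hn (c + i)).1 y.1 ∧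
    ¬ DCompat n y.1 (bD hn (c + i)).1 ∧ ¬ DCompat n (bD hn (c + i)).1 y.1 := by
  have hc := cross_dm (c := c) h0 h1 h2
  have hm : ({c, c + (k : ZMod (2 * n))} : Finset (ZMod (2 * n))) ∈ pr n c k := by simp [pr]
  rw [hy]
  exact ⟨fun h => h _ hm hc, fun h => h _ hm hc, fun h => h _ hm hc, fun h => h _ hm hc⟩

/-- The incompatibility graph restricted to `L` is connected: every `T` which is invariant
along it is constant. -/
def Conn (n : ℕ) (L : MSet n → Prop) : Prop :=
  ∀ T : MSet n → Prop, (∀ y z, L y → L z → T y → ¬ T z → DCompat n y.1 z.1) →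
    ∀ y z, L y → L z → T y → T z

lemma conn_of_const {L : MSet n → Prop} (x : MSet n)
    (h : ∀ T : MSet n → Prop, (∀ y z, L y → L z → ¬ DCompat n y.1 z.1 → ¬ DCompat n z.1 y.1 →
      (T y ↔ T z)) → ∀ y, L y → (T y ↔ T x)) : Conn n L := by
  intro T hT y z hy hz hTy
  have h1 := h T (fun y z hy hz h1 h2 => by
    constructor
    · intro h3
      by_contra h4
      exact h1 (hT y z hy hz h3 h4)
    · intro h3
      by_contra h4
      exact h2 (hT z y hz hy h3 h4))
  rw [h1 z hz, ← h1 y hy]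
  exact hTy

lemma conn_all (hn : 4 ≤ n) : Conn n (fun _ => True) := by
  refine conn_of_const (rD hn 0) fun T hT => ?_
  have rb : ∀ a b, dm n a ≠ dm n b → (T (rD hn a) ↔ T (bD hn b)) := fun a b h =>
    hT _ _ trivial trivial h (Ne.symm h)
  have n01 : dm n (0 : ZMod (2 * n)) ≠ dm n (0 + 1) := by
    have := dm_ne (n := n) (a := 0) (i := 0) (j := 1) (by omega) (by omega)
    simpa using this
  have n12 : dm n (0 + 1 : ZMod (2 * n)) ≠ dm n (0 + 2) := by
    have := dm_ne (n := n) (a := 0) (i := 1) (j := 2) (by omega) (by omega)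
    simpa using this
  have n02 : dm n (0 : ZMod (2 * n)) ≠ dm n (0 + 2) := by
    have := dm_ne (n := n) (a := 0) (i := 0) (j := 2) (by omega) (by omega)
    simpa using this
  have hb : ∀ b, dm n b ≠ dm n 0 → (T (bD hn b) ↔ T (rD hn 0)) := fun b h => (rb 0 b h.symm).symm
  have hr : ∀ a, T (rD hn a) ↔ T (rD hn 0) := by
    intro a
    by_cases h : dm n a = dm n (0 + 1)
    · rw [rb a (0 + 2) (by rw [h]; exact n12)]
      exact hb _ n02.symm
    · rw [rb a (0 + 1) h]
      exact hb _ n01.symm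
  have hb' : ∀ b, T (bD hn b) ↔ T (rD hn 0) := by
    intro b
    by_cases h : dm n b = dm n 0
    · rw [← rb (0 + 1) b (by rw [h]; exact n01.symm)]
      exact hr _
    · exact hb b h
  intro y _
  rcases cases_MSet hn y with ⟨a, rfl⟩ | ⟨a, rfl⟩ | ⟨c, k, h1, h2, hy⟩
  · exact hr a
  · exact hb' a
  · have h3 := pair_not_compat hn hy (i := 1) (by omega) (by omega) h2
    rw [hT y _ trivial trivial h3.1 h3.2.1]
    exact hr _

/-- The link of `x`. -/
def Lk (x : MSet n) (y : MSet n) : Prop := y ≠ x ∧ DCompat n x.1 y.1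

lemma rD_ne {hn : 4 ≤ n} {a b : ZMod (2 * n)} (h : dm n a ≠ dm n b) : rD hn a ≠ rD hn b := by
  intro h'
  have := congrArg Subtype.val h'
  exact h (DElem.red.inj this)

lemma bD_ne {hn : 4 ≤ n} {a b : ZMod (2 * n)} (h : dm n a ≠ dm n b) : bD hn a ≠ bD hn b := by
  intro h'
  have := congrArg Subtype.val h'
  exact h (DElem.blue.inj this)

lemma rD_ne_bD {hn : 4 ≤ n} {a b : ZMod (2 * n)} : rD hn a ≠ bD hn b := by
  intro h'
  have h1 : (DElem.red (dm n a) : DElem n) = .blue (dm n b) := congrArg Subtype.val h'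
  cases h1

lemma rD_ne_sD {hn : 4 ≤ n} {a b : ZMod (2 * n)} : rD hn a ≠ sD hn b := by
  intro h'
  have h1 : (DElem.red (dm n a) : DElem n) = .pair (pr n b 2) := congrArg Subtype.val h'
  cases h1

lemma bD_ne_sD {hn : 4 ≤ n} {a b : ZMod (2 * n)} : bD hn a ≠ sD hn b := by
  intro h'
  have h1 : (DElem.blue (dm n a) : DElem n) = .pair (pr n b 2) := congrArg Subtype.val h'
  cases h1

lemma conn_red (hn : 4 ≤ n) (a : ZMod (2 * n)) : Conn n (Lk (rD hn a)) := by
  refine conn_of_const (bD hn a) fun T hT => ?_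
  have hLb : Lk (rD hn a) (bD hn a) := ⟨rD_ne_bD.symm, rfl⟩
  have hr : ∀ b, dm n b ≠ dm n a → Lk (rD hn a) (rD hn b) ∧ (T (rD hn b) ↔ T (bD hn a)) := by
    intro b hb
    have hL : Lk (rD hn a) (rD hn b) := ⟨rD_ne hb, trivial⟩
    exact ⟨hL, hT _ _ hL hLb hb hb.symm⟩
  intro y hy
  rcases cases_MSet hn y with ⟨b, rfl⟩ | ⟨b, rfl⟩ | ⟨c, k, h1, h2, hye⟩
  · refine (hr b fun h => hy.1 ?_).2
    exact Subtype.ext (congrArg DElem.red h)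
  · have : dm n a = dm n b := hy.2
    have : bD hn b = bD hn a := Subtype.ext (congrArg DElem.blue this.symm)
    rw [this]
  · have h3 := pair_not_compat hn hye (i := 1) (by omega) (by omega) h2
    have h4 : dm n (c + (1 : ℕ)) ≠ dm n a := by
      intro h
      apply h3.2.1
      have : rD hn (c + (1 : ℕ)) = rD hn a := Subtype.ext (congrArg DElem.red h)
      rw [this]
      exact hy.2
    rw [hT y _ hy (hr _ h4).1 h3.1 h3.2.1]
    exact (hr _ h4).2

lemma conn_blue (hn : 4 ≤ n) (a : ZMod (2 * n)) : Conn n (Lk (bD hn a)) := by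
  refine conn_of_const (rD hn a) fun T hT => ?_
  have hLb : Lk (bD hn a) (rD hn a) := ⟨rD_ne_bD, rfl⟩
  have hr : ∀ b, dm n b ≠ dm n a → Lk (bD hn a) (bD hn b) ∧ (T (bD hn b) ↔ T (rD hn a)) := by
    intro b hb
    have hL : Lk (bD hn a) (bD hn b) := ⟨bD_ne hb, trivial⟩
    exact ⟨hL, hT _ _ hL hLb hb hb.symm⟩
  intro y hy
  rcases cases_MSet hn y with ⟨b, rfl⟩ | ⟨b, rfl⟩ | ⟨c, k, h1, h2, hye⟩
  · have : dm n a = dm n b := hy.2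
    have : rD hn b = rD hn a := Subtype.ext (congrArg DElem.red this.symm)
    rw [this]
  · refine (hr b fun h => hy.1 ?_).2
    exact Subtype.ext (congrArg DElem.blue h)
  · have h3 := pair_not_compat hn hye (i := 1) (by omega) (by omega) h2
    have h4 : dm n (c + (1 : ℕ)) ≠ dm n a := by
      intro h
      apply h3.2.2.2
      have : bD hn (c + (1 : ℕ)) = bD hn a := Subtype.ext (congrArg DElem.blue h)
      rw [this]
      exact hy.2
    rw [hT y _ hy (hr _ h4).1 h3.2.2.1 h3.2.2.2]
    exact (hr _ h4).2

lemma short_compat (hn : 4 ≤ n) {a b : ZMod (2 * n)} (h : dm n b ≠ dm n (a + 1)) :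
    ∀ f ∈ pr n a 2, ¬ Crosses (2 * n) (dm n b) f := by
  intro f hf hc
  simp only [pr, Finset.mem_insert, Finset.mem_singleton, Nat.cast_ofNat] at hf
  rcases hf with rfl | rfl
  · exact h (cross_short hn hc)
  · apply h
    have e : a + 2 + (n : ZMod (2 * n)) = a + n + 2 := by ring
    rw [e] at hc
    rw [cross_short hn hc, ← dm_add (a + 1)]
    congr 1
    ring

lemma pr_add (a : ZMod (2 * n)) (k : ℕ) : pr n (a + n) k = pr n a k := by
  unfold pr
  have e1 : a + (n : ZMod (2 * n)) + n = a := by rw [add_assoc, nn_zero, add_zero]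
  have e2 : a + (n : ZMod (2 * n)) + k + n = a + k := by
    linear_combination nn_zero (n := n)
  have e3 : a + (n : ZMod (2 * n)) + k = a + k + n := by ring
  rw [e1, e2, e3, Finset.pair_comm]

lemma conn_short (hn : 4 ≤ n) (a : ZMod (2 * n)) : Conn n (Lk (sD hn a)) := by
  refine conn_of_const (rD hn a) fun T hT => ?_
  have hLr : ∀ b, dm n b ≠ dm n (a + 1) → Lk (sD hn a) (rD hn b) := fun b hb =>
    ⟨rD_ne_sD, short_compat hn hb⟩
  have hLb : ∀ b, dm n b ≠ dm n (a + 1) → Lk (sD hn a) (bD hn b) := fun b hb =>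
    ⟨bD_ne_sD, short_compat hn hb⟩
  have n01 : dm n a ≠ dm n (a + 1) := by
    have := dm_ne (n := n) (a := a) (i := 0) (j := 1) (by omega) (by omega)
    simpa using this
  have n02 : dm n a ≠ dm n (a + 2) := by
    have := dm_ne (n := n) (a := a) (i := 0) (j := 2) (by omega) (by omega)
    simpa using this
  have n03 : dm n a ≠ dm n (a + 3) := by
    have := dm_ne (n := n) (a := a) (i := 0) (j := 3) (by omega) (by omega)
    simpa using this
  have n12 : dm n (a + 1) ≠ dm n (a + 2) := by
    have := dm_ne (n := n) (a := a) (i := 1) (j := 2) (by omega) (by omega)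
    simpa using this
  have n13 : dm n (a + 1) ≠ dm n (a + 3) := by
    have := dm_ne (n := n) (a := a) (i := 1) (j := 3) (by omega) (by omega)
    simpa using this
  have n23 : dm n (a + 2) ≠ dm n (a + 3) := by
    have := dm_ne (n := n) (a := a) (i := 2) (j := 3) (by omega) (by omega)
    simpa using this
  have rb : ∀ b c, dm n b ≠ dm n (a + 1) → dm n c ≠ dm n (a + 1) → dm n b ≠ dm n c →
      (T (rD hn b) ↔ T (bD hn c)) := fun b c hb hc h =>
    hT _ _ (hLr b hb) (hLb c hc) h (Ne.symm h)
  have hb : ∀ b, dm n b ≠ dm n (a + 1) → dm n b ≠ dm n a → (T (bD hn b) ↔ T (rD hn a)) :=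
    fun b h h' => (rb a b n01 h h'.symm).symm
  have hr : ∀ b, dm n b ≠ dm n (a + 1) → (T (rD hn b) ↔ T (rD hn a)) := by
    intro b hb1
    by_cases h : dm n b = dm n (a + 2)
    · rw [rb b (a + 3) hb1 n13.symm (by rw [h]; exact n23)]
      exact hb _ n13.symm n03.symm
    · rw [rb b (a + 2) hb1 n12.symm h]
      exact hb _ n12.symm n02.symm
  have hb' : ∀ b, dm n b ≠ dm n (a + 1) → (T (bD hn b) ↔ T (rD hn a)) := by
    intro b hb1
    by_cases h : dm n b = dm n a
    · rw [← rb (a + 2) b n12.symm hb1 (by rw [h]; exact n02.symm)]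
      exact hr _ n12.symm
    · exact hb b hb1 h
  have hcompat : ∀ b, (∀ f ∈ pr n a 2, ¬ Crosses (2 * n) (dm n b) f) →
      dm n b ≠ dm n (a + 1) := by
    intro b hcb h
    have h1 := cross_dm (n := n) (c := a) (i := 1) (k := 2) (by omega) (by omega) (by omega)
    refine hcb _ ?_ (by rw [h]; simpa using h1)
    simp [pr]
  intro y hy
  rcases cases_MSet hn y with ⟨b, rfl⟩ | ⟨b, rfl⟩ | ⟨c, k, h1, h2, hye⟩
  · exact hr b (hcompat b hy.2)
  · exact hb' b (hcompat b hy.2)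
  · by_cases h4 : dm n (c + (1 : ℕ)) = dm n (a + 1)
    · have hca : pr n c k = pr n a k ∧ dm n (c + (2 : ℕ)) = dm n (a + 2) := by
        push_cast at h4 ⊢
        rcases dm_eq_iff.1 h4 with h5 | h5
        · have : c = a := by linear_combination h5
          rw [this]; exact ⟨rfl, rfl⟩
        · have : c = a + n := by linear_combination h5
          rw [this, pr_add, ← dm_add (a + 2)]
          refine ⟨rfl, ?_⟩
          congr 1
          ring
      have hk : k ≠ 2 := by
        rintro rfl
        apply hy.1
        apply Subtype.ext
        rw [hye, hca.1]
        rfl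
      have h3 := pair_not_compat hn hye (i := 2) (by omega) (by omega) h2
      have h5 : dm n (c + (2 : ℕ)) ≠ dm n (a + 1) := by rw [hca.2]; exact n12.symm
      rw [hT y _ hy (hLr _ h5) h3.1 h3.2.1]
      exact hr _ h5
    · have h3 := pair_not_compat hn hye (i := 1) (by omega) (by omega) h2
      rw [hT y _ hy (hLr _ h4) h3.1 h3.2.1]
      exact hr _ h4

lemma dm_cast_inj {i j : ℕ} (hi : i < n) (hj : j < n)
    (h : dm n (i : ZMod (2 * n)) = dm n (j : ZMod (2 * n))) : i = j := by
  by_contra hne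
  rcases lt_or_gt_of_ne hne with h1 | h1
  · exact dm_ne (n := n) (a := 0) h1 (by omega) (by simpa using h)
  · exact dm_ne (n := n) (a := 0) h1 (by omega) (by simpa using h.symm)

lemma short_inj (hn : 4 ≤ n) {a b : ZMod (2 * n)} (h : pr n a 2 = pr n b 2) :
    dm n (a + 1) = dm n (b + 1) := by
  by_contra hne
  have h1 := cross_dm (n := n) (c := a) (i := 1) (k := 2) (by omega) (by omega) (by omega)
  refine short_compat hn hne _ ?_ (by simpa using h1)
  rw [← h]
  simp [pr]

end Model

/-! ### The theorem -/

section Main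

variable {n d : ℕ} {P : Set (Fin d → ℝ)} {φ : MSet n → Set (Fin d → ℝ)}

lemma indecomposable_of_conn (hP : RealizesDWith n P φ) (h : Conn n (fun _ => True)) :
    Indecomposable P := by
  by_contra hcon
  obtain ⟨hpoly, -, -, hfac, -, hsurj, hcomp⟩ := hP
  obtain ⟨T, ⟨F, hF, hTF⟩, ⟨G, hG, hTG⟩, hT⟩ := exists_split hpoly hcon
  obtain ⟨y, rfl⟩ := hsurj F hF
  obtain ⟨z, rfl⟩ := hsurj G hG
  refine hTG (h (fun x => T (φ x)) ?_ y z trivial trivial hTF)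
  intro y z _ _ hy hz
  have hne : y ≠ z := by rintro rfl; exact hz hy
  exact (hcomp y z hne).1 (hT _ _ (hfac y) (hfac z) hy hz)

lemma facet_indecomposable_of_conn (hP : RealizesDWith n P φ) (x : MSet n)
    (h : Conn n (Lk x)) : Indecomposable (φ x) := by
  by_contra hcon
  obtain ⟨hpoly, hflag, -, hfac, hinj, hsurj, hcomp⟩ := hP
  obtain ⟨T, ⟨F, hF, hTF⟩, ⟨G, hG, hTG⟩, hT⟩ :=
    exists_split ((hfac x).1.isPolytope hpoly) hcon
  have hlink : ∀ C, IsFacetOf C (φ x) → ∃ y, Lk x y ∧ C = φ x ∩ φ y := by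
    intro C hC
    obtain ⟨G, hG, hne, rfl⟩ := facet_of_facet hpoly (hfac x) hC
    obtain ⟨y, rfl⟩ := hsurj G hG
    have hyx : y ≠ x := by rintro rfl; exact hne rfl
    exact ⟨y, ⟨hyx, (hcomp x y hyx.symm).1 hC.1.1⟩, rfl⟩
  have hfacet : ∀ y, Lk x y → IsFacetOf (φ x ∩ φ y) (φ x) := by
    intro y hy
    exact inter_facet hflag.1 (hfac x) (hfac y) (fun h => hy.1 (hinj h))
      ((hcomp x y hy.1.symm).2 hy.2)
  obtain ⟨y, hy, rfl⟩ := hlink F hF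
  obtain ⟨z, hz, rfl⟩ := hlink G hG
  refine hTG (h (fun y => T (φ x ∩ φ y)) ?_ y z hy hz hTF)
  intro y z hy hz hTy hTz
  have hne : y ≠ z := by rintro rfl; exact hTz hTy
  refine (hcomp y z hne).1 ((hT _ _ (hfacet y hy) (hfacet z hz) hTy hTz).mono ?_)
  rintro p ⟨hp1, hp2⟩
  exact ⟨hp1.2, hp2.2⟩

end Main

/-- for `n ≥ 4`, a type `D_n` generalized associahedron is
indecomposable and has at least `2n + 3` indecomposable facets. -/
theorem typeD_indecomposable (n d : ℕ) (hn : 4 ≤ n) (P : Set (Fin d → ℝ))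
    (φ : MSet n → Set (Fin d → ℝ)) (hP : RealizesDWith n P φ) :
    Indecomposable P ∧
    2 * n + 3 ≤ {F : Set (Fin d → ℝ) | IsFacetOf F P ∧ Indecomposable F}.ncard := by
  refine ⟨indecomposable_of_conn hP (conn_all hn), ?_⟩
  have hinj : Function.Injective φ := hP.2.2.2.2.1
  have hfac : ∀ x, IsFacetOf (φ x) P := hP.2.2.2.1
  let f : Fin n ⊕ Fin n ⊕ Fin 3 → MSet n
    | .inl i => rD hn ((i : ℕ) : ZMod (2 * n))
    | .inr (.inl i) => bD hn ((i : ℕ) : ZMod (2 * n))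
    | .inr (.inr i) => sD hn ((i : ℕ) : ZMod (2 * n))
  have hf : Function.Injective f := by
    rintro (i | i | i) (j | j | j) h
    · have h1 := dm_cast_inj i.2 j.2 (DElem.red.inj (congrArg Subtype.val h))
      rw [Fin.ext h1]
    · exact absurd h rD_ne_bD
    · exact absurd h rD_ne_sD
    · exact absurd h rD_ne_bD.symm
    · have h1 := dm_cast_inj i.2 j.2 (DElem.blue.inj (congrArg Subtype.val h))
      rw [Fin.ext h1]
    · exact absurd h bD_ne_sD
    · exact absurd h rD_ne_sD.symm
    · exact absurd h bD_ne_sD.symm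
    · have h1 := short_inj hn (DElem.pair.inj (congrArg Subtype.val h))
      have h2 : (i : ℕ) + 1 = (j : ℕ) + 1 :=
        dm_cast_inj (n := n) (by omega) (by omega) (by push_cast; exact h1)
      have h3 : (i : ℕ) = j := by omega
      rw [Fin.ext h3]
  have hsub : Set.range (fun i => φ (f i)) ⊆
      {F : Set (Fin d → ℝ) | IsFacetOf F P ∧ Indecomposable F} := by
    rintro _ ⟨i, rfl⟩
    refine ⟨hfac _, facet_indecomposable_of_conn hP _ ?_⟩
    rcases i with i | i | i
    · exact conn_red hn _
    · exact conn_blue hn _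
    · exact conn_short hn _
  have hfin : {F : Set (Fin d → ℝ) | IsFacetOf F P ∧ Indecomposable F}.Finite :=
    (finite_faces hP.1).subset fun F hF => hF.1.1
  have h1 := Set.ncard_le_ncard hsub hfin
  have h2 : (Set.range (fun i => φ (f i))).ncard = Nat.card (Fin n ⊕ Fin n ⊕ Fin 3) :=
    Set.ncard_range_of_injective (hinj.comp hf)
  rw [h2, Nat.card_eq_fintype_card, Fintype.card_sum, Fintype.card_sum, Fintype.card_fin,
    Fintype.card_fin] at h1
  omega

end GalD
end
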